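/- arXiv:1807.01894 — 2 statements merged into one kernel-verified Lean document; each statement's English description precedes it below -/
import Mathlib

section
/- Let H be a cosemisimple Hopf algebra over an algebraically closed field k, and let V = ⊕_{α∈F} C_α be the direct sum of the simple subcoalgebras of H indexed by a finite subset F ⊆ Ĥ. Then for every n ≥ 1, dim_k V^n = Σ_{β∈F_n} (dim_k S_β)², where F_n = { β ∈ Ĥ : S_β is a direct summand of (⊕_{α∈F} S_α)^{⊗n} }. -/
/-!
Background definitions: comodules over a Hopf algebra, simple comodules, direct
summands, supports, subcoalgebras, cosemisimplicity, Gelfand-Kirillov dimension,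
and (measured) Grothendieck semirings of cosemisimple Hopf algebras.
-/

open TensorProduct

/-- The data of a coaction of a Hopf algebra `H` on a `k`-vector space `X`:
a linear map `ρ : X → X ⊗ H`.  The comodule axioms are recorded separately in
`Comod.IsComodule`. -/
structure Comod (k : Type) [Field k] (H : Type) [Ring H] [HopfAlgebra k H] : Type 1 where
  X : Type
  [addCommGroup : AddCommGroup X]
  [module : Module k X]
  ρ : X →ₗ[k] X ⊗[k] H

attribute [instance] Comod.addCommGroup Comod.module

namespace Comod

variable {k : Type} [Field k] {H : Type} [Ring H] [HopfAlgebra k H]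

/-- The trivial `H`-comodule `𝟏`, i.e. `k` with coaction `x ↦ x ⊗ 1`. -/
noncomputable def unit (k : Type) [Field k] (H : Type) [Ring H] [HopfAlgebra k H] :
    Comod k H where
  X := k
  ρ := (TensorProduct.mk k k H).flip 1

/-- The regular comodule: `H` coacting on itself by comultiplication. -/
noncomputable def regular (k : Type) [Field k] (H : Type) [Ring H] [HopfAlgebra k H] :
    Comod k H where
  X := H
  ρ := Coalgebra.comul

/-- Tensor product of comodules: the coaction on `M ⊗ N` is
`(id ⊗ id ⊗ μ_H) ∘ (id ⊗ τ ⊗ id) ∘ (ρ_M ⊗ ρ_N)`. -/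
noncomputable def tensor (M N : Comod k H) : Comod k H where
  X := M.X ⊗[k] N.X
  ρ := (LinearMap.mul' k H).lTensor (M.X ⊗[k] N.X)
        ∘ₗ (TensorProduct.tensorTensorTensorComm k M.X H N.X H).toLinearMap
        ∘ₗ TensorProduct.map M.ρ N.ρ

/-- Binary direct sum of comodules. -/
noncomputable def dsum (M N : Comod k H) : Comod k H where
  X := M.X × N.X
  ρ := (LinearMap.inl k M.X N.X).rTensor H ∘ₗ M.ρ ∘ₗ LinearMap.fst k M.X N.X
     + (LinearMap.inr k M.X N.X).rTensor H ∘ₗ N.ρ ∘ₗ LinearMap.snd k M.X N.X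

/-- Finite direct sum of a family of comodules. -/
noncomputable def pi {ι : Type} [Fintype ι] (S : ι → Comod k H) : Comod k H where
  X := ∀ i, (S i).X
  ρ := letI := Classical.decEq ι
    ∑ i : ι, (LinearMap.single k (fun j => (S j).X) i).rTensor H ∘ₗ (S i).ρ
        ∘ₗ LinearMap.proj i

/-- `n`-th tensor power of a comodule (`M^{⊗0} = 𝟏`, `M^{⊗1} = M`). -/
noncomputable def tpow (M : Comod k H) : ℕ → Comod k H
  | 0 => unit k H
  | 1 => M
  | n + 2 => (M.tpow (n + 1)).tensor M

/-- A linear map is a map of comodules if it intertwines the coactions. -/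
def IsHom (M N : Comod k H) (f : M.X →ₗ[k] N.X) : Prop :=
  N.ρ ∘ₗ f = f.rTensor H ∘ₗ M.ρ

/-- Isomorphism of comodules. -/
def Iso (M N : Comod k H) : Prop :=
  ∃ e : M.X ≃ₗ[k] N.X, IsHom M N e.toLinearMap

/-- The comodule axioms (coassociativity and counitality) for a coaction. -/
def IsComodule (M : Comod k H) : Prop :=
  (M.ρ.rTensor H ∘ₗ M.ρ =
      (TensorProduct.assoc k M.X H H).symm.toLinearMap
        ∘ₗ (Coalgebra.comul (R := k) (A := H)).lTensor M.X ∘ₗ M.ρ) ∧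
  (TensorProduct.rid k M.X).toLinearMap
      ∘ₗ (Coalgebra.counit (R := k) (A := H)).lTensor M.X ∘ₗ M.ρ = LinearMap.id

/-- A subspace `N ⊆ M` is a subcomodule if the coaction restricts to `N ⊗ H`. -/
def IsSubcomodule (M : Comod k H) (N : Submodule k M.X) : Prop :=
  ∀ x ∈ N, M.ρ x ∈ LinearMap.range (N.subtype.rTensor H)

/-- Simple (hence finite-dimensional) comodules. -/
def IsSimple (M : Comod k H) : Prop :=
  M.IsComodule ∧ Nontrivial M.X ∧ FiniteDimensional k M.X ∧
    ∀ N : Submodule k M.X, M.IsSubcomodule N → N = ⊥ ∨ N = ⊤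

/-- `S` is a direct summand of `M` (as comodules): the inclusion splits. -/
def DirectSummand (S M : Comod k H) : Prop :=
  ∃ (i : S.X →ₗ[k] M.X) (p : M.X →ₗ[k] S.X),
    IsHom S M i ∧ IsHom M S p ∧ p ∘ₗ i = LinearMap.id

/-- `C` is the support of the comodule `M`: the (unique) minimal subspace
`C ⊆ H` with `ρ(M) ⊆ M ⊗ C`. -/
def IsSupport (M : Comod k H) (C : Submodule k H) : Prop :=
  (∀ x : M.X, M.ρ x ∈ LinearMap.range (C.subtype.lTensor M.X)) ∧
    ∀ C' : Submodule k H,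
      (∀ x : M.X, M.ρ x ∈ LinearMap.range (C'.subtype.lTensor M.X)) → C ≤ C'

end Comod

/-- A subspace `C ⊆ H` is a subcoalgebra if `Δ(C) ⊆ C ⊗ C`. -/
def IsSubcoalgebra (k : Type) [Field k] (H : Type) [Ring H] [HopfAlgebra k H]
    (C : Submodule k H) : Prop :=
  ∀ x ∈ C, Coalgebra.comul (R := k) x ∈
    LinearMap.range (TensorProduct.map C.subtype C.subtype)

/-- A simple subcoalgebra: a nonzero subcoalgebra with no proper nonzero
subcoalgebras. -/
def IsSimpleSubcoalgebra (k : Type) [Field k] (H : Type) [Ring H] [HopfAlgebra k H]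
    (C : Submodule k H) : Prop :=
  IsSubcoalgebra k H C ∧ C ≠ ⊥ ∧
    ∀ D : Submodule k H, D ≤ C → IsSubcoalgebra k H D → D = ⊥ ∨ D = C

/-- A Hopf algebra is cosemisimple if every subcomodule of every comodule is a
direct summand. -/
def IsCosemisimple (k : Type) [Field k] (H : Type) [Ring H] [HopfAlgebra k H] : Prop :=
  ∀ M : Comod k H, M.IsComodule →
    ∀ N : Submodule k M.X, M.IsSubcomodule N →
      ∃ N' : Submodule k M.X, M.IsSubcomodule N' ∧ IsCompl N N'

open scoped ENNReal in
/-- The Gelfand-Kirillov dimension of a `k`-algebra `A`: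
`sup_V limsup_n log(dim V^n)/log n` over finite-dimensional subspaces `V ⊆ A`
(for a finitely generated algebra this agrees with the value computed from any
finite-dimensional generating subspace containing `1`). -/
noncomputable def GKdim (k : Type) (A : Type) [Field k] [Ring A] [Algebra k A] : ℝ≥0∞ :=
  ⨆ (V : Submodule k A) (_ : FiniteDimensional k V),
    Filter.limsup
      (fun n : ℕ => ENNReal.ofReal
        (Real.log (Module.finrank k ↥(V ^ n)) / Real.log n)) Filter.atTop

/-- The (measured) Grothendieck semiring of a cosemisimple Hopf algebra `H`:
a commutative semiring `R` together with a class map `cls` on finite-dimensional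
`H`-comodules which is constant on isomorphism classes, additive on direct sums,
multiplicative on tensor products, sends `𝟏` to `1`, and induces a bijection
between iso-classes of finite-dimensional comodules and elements of `R`.
The dimension function `d_H` on `R_+(H)` is recovered as `cls M ↦ dim_k M`. -/
structure GrSemiring (k : Type) [Field k] (H : Type) [Ring H] [HopfAlgebra k H] :
    Type 1 where
  R : Type
  [commSemiring : CommSemiring R]
  cls : Comod k H → R
  cls_one : cls (Comod.unit k H) = 1
  cls_iso : ∀ M N : Comod k H, M.IsComodule → N.IsComodule →
    FiniteDimensional k M.X → FiniteDimensional k N.X → Comod.Iso M N → cls M = cls N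
  cls_dsum : ∀ M N : Comod k H, M.IsComodule → N.IsComodule →
    FiniteDimensional k M.X → FiniteDimensional k N.X →
      cls (M.dsum N) = cls M + cls N
  cls_tensor : ∀ M N : Comod k H, M.IsComodule → N.IsComodule →
    FiniteDimensional k M.X → FiniteDimensional k N.X →
      cls (M.tensor N) = cls M * cls N
  cls_surj : ∀ r : R, ∃ M : Comod k H, M.IsComodule ∧ FiniteDimensional k M.X ∧ cls M = r
  cls_inj : ∀ M N : Comod k H, M.IsComodule → N.IsComodule →
    FiniteDimensional k M.X → FiniteDimensional k N.X → cls M = cls N → Comod.Iso M N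

attribute [instance] GrSemiring.commSemiring
namespace Comod
variable {k : Type} [Field k] {H : Type} [Ring H] [HopfAlgebra k H]

/-- Matrix coefficient functional slice. -/
noncomputable def slice (X : Type) [AddCommGroup X] [Module k X] (φ : X →ₗ[k] k) :
    X ⊗[k] H →ₗ[k] H := (TensorProduct.lid k H).toLinearMap ∘ₗ φ.rTensor H

@[simp] lemma slice_tmul (X : Type) [AddCommGroup X] [Module k X] (φ : X →ₗ[k] k)
    (x : X) (h : H) : slice (k := k) X φ (x ⊗ₜ h) = φ x • h := by
  simp [slice]

lemma slice_rTensor {X Y : Type} [AddCommGroup X] [Module k X] [AddCommGroup Y] [Module k Y]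
    (φ : Y →ₗ[k] k) (f : X →ₗ[k] Y) (z : X ⊗[k] H) :
    slice (k := k) Y φ (f.rTensor H z) = slice X (φ ∘ₗ f) z := by
  induction z with
  | zero => simp
  | tmul x h => simp
  | add a b ha hb => simp only [map_add, ha, hb]


section Unbundled
variable {X Y : Type} [AddCommGroup X] [Module k X] [AddCommGroup Y] [Module k Y]

/-- Coefficient space of a coaction. -/
noncomputable def cfR (ρ : X →ₗ[k] X ⊗[k] H) : Submodule k H :=
  ⨆ φ : X →ₗ[k] k, LinearMap.range (slice X φ ∘ₗ ρ)

lemma slice_mem_cfR (ρ : X →ₗ[k] X ⊗[k] H) (φ : X →ₗ[k] k) (x : X) :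
    slice X φ (ρ x) ∈ cfR ρ :=
  Submodule.mem_iSup_of_mem φ ⟨x, rfl⟩

lemma cfR_le {ρ : X →ₗ[k] X ⊗[k] H} {C : Submodule k H}
    (h : ∀ φ x, slice X φ (ρ x) ∈ C) : cfR ρ ≤ C := by
  refine iSup_le fun φ => ?_
  rintro _ ⟨x, rfl⟩
  exact h φ x

/-- Comodule axioms, unbundled. -/
def IsCoR (ρ : X →ₗ[k] X ⊗[k] H) : Prop :=
  (ρ.rTensor H ∘ₗ ρ =
      (TensorProduct.assoc k X H H).symm.toLinearMap
        ∘ₗ (Coalgebra.comul (R := k) (A := H)).lTensor X ∘ₗ ρ) ∧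
  (TensorProduct.rid k X).toLinearMap
      ∘ₗ (Coalgebra.counit (R := k) (A := H)).lTensor X ∘ₗ ρ = LinearMap.id

/-- Tensor coaction, unbundled. -/
noncomputable def tR (ρ : X →ₗ[k] X ⊗[k] H) (σ : Y →ₗ[k] Y ⊗[k] H) :
    X ⊗[k] Y →ₗ[k] (X ⊗[k] Y) ⊗[k] H :=
  (LinearMap.mul' k H).lTensor (X ⊗[k] Y)
        ∘ₗ (TensorProduct.tensorTensorTensorComm k X H Y H).toLinearMap
        ∘ₗ TensorProduct.map ρ σ

/-- Direct sum coaction, unbundled. -/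
noncomputable def piR {ι : Type} [Fintype ι] {Z : ι → Type} [∀ i, AddCommGroup (Z i)]
    [∀ i, Module k (Z i)] (ρ : ∀ i, Z i →ₗ[k] Z i ⊗[k] H) :
    (∀ i, Z i) →ₗ[k] (∀ i, Z i) ⊗[k] H :=
  letI := Classical.decEq ι
    ∑ i : ι, (LinearMap.single k Z i).rTensor H ∘ₗ ρ i ∘ₗ LinearMap.proj i

/-- product map -/
noncomputable def P (X Y : Type) [AddCommGroup X] [Module k X] [AddCommGroup Y] [Module k Y] :
    (X ⊗[k] H) ⊗[k] (Y ⊗[k] H) →ₗ[k] (X ⊗[k] Y) ⊗[k] H :=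
  (LinearMap.mul' k H).lTensor (X ⊗[k] Y)
        ∘ₗ (TensorProduct.tensorTensorTensorComm k X H Y H).toLinearMap

@[simp] lemma P_tmul (X Y : Type) [AddCommGroup X] [Module k X] [AddCommGroup Y] [Module k Y]
    (x : X) (y : Y) (h g : H) :
    P (k := k) X Y ((x ⊗ₜ h) ⊗ₜ (y ⊗ₜ g)) = (x ⊗ₜ y) ⊗ₜ (h * g) := by
  simp [P]

lemma tensor_ρ (ρ : X →ₗ[k] X ⊗[k] H) (σ : Y →ₗ[k] Y ⊗[k] H) (x : X) (y : Y) :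
    (tR ρ σ) (x ⊗ₜ[k] y) = P X Y (ρ x ⊗ₜ σ y) := rfl

lemma slice_P (X Y : Type) [AddCommGroup X] [Module k X] [AddCommGroup Y] [Module k Y]
    (φ : X →ₗ[k] k) (ψ : Y →ₗ[k] k) (u : X ⊗[k] H) (v : Y ⊗[k] H) :
    slice (k := k) (X ⊗[k] Y) (LinearMap.mul' k k ∘ₗ TensorProduct.map φ ψ) (P X Y (u ⊗ₜ v)) =
      slice X φ u * slice Y ψ v := by
  induction u with
  | zero => simp
  | add a b ha hb => simp only [map_add, add_mul, TensorProduct.add_tmul, ha, hb]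
  | tmul x h =>
    induction v with
    | zero => simp
    | add a b ha hb => simp only [map_add, mul_add, TensorProduct.tmul_add, ha, hb]
    | tmul y g => simp [smul_smul, mul_comm]

lemma cf_tensor (ρ : X →ₗ[k] X ⊗[k] H) (σ : Y →ₗ[k] Y ⊗[k] H)
    [FiniteDimensional k X] [FiniteDimensional k Y] :
    cfR (tR ρ σ) = cfR ρ * cfR σ := by
  apply le_antisymm
  · refine cfR_le fun φ z => ?_
    have hz : ∀ x : X, ∀ y : Y, slice (X ⊗[k] Y) φ ((tR ρ σ) (x ⊗ₜ[k] y)) ∈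
        cfR ρ * cfR σ := by
      intro x y
      let b := Module.finBasis k X
      let c := Module.finBasis k Y
      have hφ : φ = ∑ i, ∑ j, φ (b i ⊗ₜ c j) •
          (LinearMap.mul' k k ∘ₗ TensorProduct.map (b.coord i) (c.coord j)) := by
        refine (b.tensorProduct c).ext fun ij => ?_
        obtain ⟨i, j⟩ := ij
        simp only [Module.Basis.tensorProduct_apply, LinearMap.sum_apply, LinearMap.smul_apply,
          LinearMap.comp_apply, TensorProduct.map_tmul, LinearMap.mul'_apply,
          Module.Basis.coord_apply, Module.Basis.repr_self, smul_eq_mul]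
        rw [Finset.sum_eq_single i, Finset.sum_eq_single j]
        · simp
        · intro j' _ hj
          simp [hj.symm]
        · simp
        · intro i' _ hi
          simp [Finsupp.single_apply, hi.symm]
        · simp
      have hs : ∀ (w : (X ⊗[k] Y) ⊗[k] H), slice (X ⊗[k] Y) φ w =
          ∑ i, ∑ j, φ (b i ⊗ₜ c j) • slice (X ⊗[k] Y)
            (LinearMap.mul' k k ∘ₗ TensorProduct.map (b.coord i) (c.coord j)) w := by
        intro w
        induction w with
        | zero => simp
        | add a d ha hd =>
          simp only [map_add, ha, hd, smul_add, Finset.sum_add_distrib]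
        | tmul w h =>
          rw [slice_tmul]
          conv_lhs => rw [hφ]
          simp only [slice_tmul, LinearMap.sum_apply, LinearMap.smul_apply, Finset.sum_smul,
            smul_assoc]
      rw [tensor_ρ, hs]
      refine Submodule.sum_mem _ fun i _ => Submodule.sum_mem _ fun j _ =>
        Submodule.smul_mem _ _ ?_
      rw [slice_P]
      exact Submodule.mul_mem_mul (slice_mem_cfR _ _ _) (slice_mem_cfR _ _ _)
    induction z with
    | zero => rw [map_zero, map_zero]; exact zero_mem _
    | tmul x y => exact hz x y
    | add a d ha hd => rw [map_add, map_add]; exact Submodule.add_mem _ ha hd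
  · rw [cfR, cfR, Submodule.iSup_mul]
    refine iSup_le fun φ => ?_
    rw [Submodule.mul_iSup]
    refine iSup_le fun ψ => ?_
    rw [Submodule.mul_le]
    rintro _ ⟨x, rfl⟩ _ ⟨y, rfl⟩
    simp only [LinearMap.comp_apply]
    rw [← slice_P, ← tensor_ρ]
    exact slice_mem_cfR (tR ρ σ) _ _

lemma pi_ρ_single {ι : Type} [Fintype ι] [DecidableEq ι] {Z : ι → Type} [∀ i, AddCommGroup (Z i)]
    [∀ i, Module k (Z i)] (S : ∀ i, Z i →ₗ[k] Z i ⊗[k] H) (i : ι)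
    (x : Z i) : (piR S) (Pi.single i x : ∀ j, Z j) =
      (LinearMap.single k Z i).rTensor H ((S i) x) := by
  have : ‹DecidableEq ι› = Classical.decEq ι := Subsingleton.elim _ _
  subst this
  simp only [piR, LinearMap.sum_apply, LinearMap.comp_apply, LinearMap.proj_apply]
  rw [Finset.sum_eq_single i]
  · simp
  · intro j _ hj
    letI := Classical.decEq ι
    simp [Pi.single_eq_of_ne hj]
  · simp

lemma cf_pi {ι : Type} [Fintype ι] {Z : ι → Type} [∀ i, AddCommGroup (Z i)]
    [∀ i, Module k (Z i)] (S : ∀ i, Z i →ₗ[k] Z i ⊗[k] H) : cfR (piR S) = ⨆ i, cfR (S i) := by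
  classical
  apply le_antisymm
  · refine cfR_le fun φ z => ?_
    have hz : z = ∑ i, (Pi.single i (z i) : ∀ j, Z j) := (Finset.univ_sum_single z).symm
    rw [hz]; rw [map_sum, map_sum]
    refine Submodule.sum_mem _ fun i _ => ?_
    rw [pi_ρ_single]
    rw [slice_rTensor]
    exact Submodule.mem_iSup_of_mem i (slice_mem_cfR _ _ _)
  · refine iSup_le fun i => cfR_le fun φ x => ?_
    have := slice_mem_cfR (piR S) (φ ∘ₗ LinearMap.proj i) (Pi.single i x : ∀ j, Z j)
    rw [pi_ρ_single] at this
    rw [slice_rTensor] at this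
    convert this
    ext y
    simp

lemma pi_isComodule {ι : Type} [Fintype ι] {Z : ι → Type} [∀ i, AddCommGroup (Z i)]
    [∀ i, Module k (Z i)] (S : ∀ i, Z i →ₗ[k] Z i ⊗[k] H) (h : ∀ i, IsCoR (S i)) :
    IsCoR (piR S) := by
  classical
  constructor
  · refine LinearMap.pi_ext' fun i => LinearMap.ext fun x => ?_
    have h1 := LinearMap.congr_fun (h i).1 x
    simp only [LinearMap.comp_apply, LinearEquiv.coe_coe] at h1 ⊢
    rw [LinearMap.single_apply, pi_ρ_single]
    have e1 : ∀ w : Z i ⊗[k] H, (piR S).rTensor H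
        ((LinearMap.single k Z i).rTensor H w) =
        ((LinearMap.single k Z i).rTensor H).rTensor H
          ((S i).rTensor H w) := by
      intro w
      induction w with
      | zero => simp only [map_zero]
      | add a b ha hb => simp only [map_add, ha, hb]
      | tmul x h =>
        simp only [LinearMap.rTensor_tmul]
        congr 1
        exact pi_ρ_single S i x
    have e2 : ∀ w : Z i ⊗[k] H, (TensorProduct.assoc k (∀ j, Z j) H H).symm
        ((Coalgebra.comul (R := k) (A := H)).lTensor _
        ((LinearMap.single k Z i).rTensor H w)) =
        ((LinearMap.single k Z i).rTensor H).rTensor H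
          ((TensorProduct.assoc k (Z i) H H).symm
            ((Coalgebra.comul (R := k) (A := H)).lTensor _ w)) := by
      intro w
      induction w with
      | zero => simp only [map_zero]
      | add a b ha hb => simp only [map_add, ha, hb]
      | tmul x h =>
        simp only [LinearMap.rTensor_tmul, LinearMap.lTensor_tmul]
        generalize Coalgebra.comul (R := k) h = d
        induction d with
        | zero => simp only [map_zero, TensorProduct.tmul_zero]
        | add a b ha hb => simp only [map_add, TensorProduct.tmul_add, ha, hb]
        | tmul a b => simp
    rw [e1, e2, h1]
  · refine LinearMap.pi_ext' fun i => LinearMap.ext fun x => ?_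
    have h1 := LinearMap.congr_fun (h i).2 x
    simp only [LinearMap.comp_apply, LinearEquiv.coe_coe, LinearMap.id_apply] at h1 ⊢
    rw [LinearMap.single_apply, pi_ρ_single]
    have e : ∀ w : Z i ⊗[k] H, TensorProduct.rid k (∀ j, Z j)
        ((Coalgebra.counit (R := k) (A := H)).lTensor _
        ((LinearMap.single k Z i).rTensor H w)) =
        LinearMap.single k Z i
          (TensorProduct.rid k (Z i) ((Coalgebra.counit (R := k) (A := H)).lTensor _ w)) := by
      intro w
      induction w with
      | zero => simp only [map_zero]
      | add a b ha hb => simp only [map_add, ha, hb]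
      | tmul x h => simp
    rw [e, h1]
    rfl

/-- iterated product map -/
noncomputable def Q (X Y : Type) [AddCommGroup X] [Module k X] [AddCommGroup Y] [Module k Y] :
    ((X ⊗[k] H) ⊗[k] H) ⊗[k] ((Y ⊗[k] H) ⊗[k] H) →ₗ[k] ((X ⊗[k] Y) ⊗[k] H) ⊗[k] H :=
  TensorProduct.map (P X Y) (LinearMap.mul' k H)
        ∘ₗ (TensorProduct.tensorTensorTensorComm k (X ⊗[k] H) H (Y ⊗[k] H) H).toLinearMap

@[simp] lemma Q_tmul (X Y : Type) [AddCommGroup X] [Module k X] [AddCommGroup Y] [Module k Y]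
    (x : X ⊗[k] H) (y : Y ⊗[k] H) (h g : H) :
    Q (k := k) X Y ((x ⊗ₜ h) ⊗ₜ (y ⊗ₜ g)) = (P X Y (x ⊗ₜ y)) ⊗ₜ (h * g) := by
  simp [Q]

lemma tensor_isComodule {ρ : X →ₗ[k] X ⊗[k] H} {σ : Y →ₗ[k] Y ⊗[k] H} (hM : IsCoR ρ) (hN : IsCoR σ) :
    IsCoR (tR ρ σ) := by
  constructor
  · refine TensorProduct.ext' fun x y => ?_
    have h1 := LinearMap.congr_fun hM.1 x
    have h2 := LinearMap.congr_fun hN.1 y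
    simp only [LinearMap.comp_apply, LinearEquiv.coe_coe] at h1 h2 ⊢
    have e1 : ∀ (u : X ⊗[k] H) (v : Y ⊗[k] H),
        (tR ρ σ).rTensor H (P X Y (u ⊗ₜ v)) =
          Q X Y (ρ.rTensor H u ⊗ₜ σ.rTensor H v) := by
      intro u v
      induction u with
      | zero => simp only [map_zero, TensorProduct.zero_tmul]
      | add a b ha hb => simp only [map_add, TensorProduct.add_tmul, ha, hb]
      | tmul x h =>
        induction v with
        | zero => simp only [map_zero, TensorProduct.tmul_zero]
        | add a b ha hb => simp only [map_add, TensorProduct.tmul_add, ha, hb]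
        | tmul y g =>
          simp only [LinearMap.rTensor_tmul, P_tmul, Q_tmul]
          rfl
    have e2 : ∀ (u : X ⊗[k] H) (v : Y ⊗[k] H),
        (TensorProduct.assoc k (X ⊗[k] Y) H H).symm
          ((Coalgebra.comul (R := k) (A := H)).lTensor _ (P X Y (u ⊗ₜ v))) =
          Q X Y ((TensorProduct.assoc k X H H).symm
              ((Coalgebra.comul (R := k) (A := H)).lTensor _ u) ⊗ₜ
            (TensorProduct.assoc k Y H H).symm
              ((Coalgebra.comul (R := k) (A := H)).lTensor _ v)) := by
      intro u v
      induction u with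
      | zero => simp only [map_zero, TensorProduct.zero_tmul]
      | add a b ha hb => simp only [map_add, TensorProduct.add_tmul, ha, hb]
      | tmul x h =>
        induction v with
        | zero => simp only [map_zero, TensorProduct.tmul_zero]
        | add a b ha hb => simp only [map_add, TensorProduct.tmul_add, ha, hb]
        | tmul y g =>
          simp only [LinearMap.lTensor_tmul, P_tmul, Bialgebra.comul_mul]
          generalize Coalgebra.comul (R := k) h = d
          generalize Coalgebra.comul (R := k) g = e
          induction d with
          | zero => simp only [zero_mul, map_zero, TensorProduct.zero_tmul, TensorProduct.tmul_zero]
          | add a b ha hb =>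
            simp only [add_mul, map_add, TensorProduct.add_tmul, TensorProduct.tmul_add, ha, hb]
          | tmul a b =>
            induction e with
            | zero => simp only [mul_zero, map_zero, TensorProduct.tmul_zero]
            | add a b ha hb =>
              simp only [mul_add, map_add, TensorProduct.tmul_add, ha, hb]
            | tmul c d => simp
    rw [tensor_ρ, e1, e2, h1, h2]
  · refine TensorProduct.ext' fun x y => ?_
    have h1 := LinearMap.congr_fun hM.2 x
    have h2 := LinearMap.congr_fun hN.2 y
    simp only [LinearMap.comp_apply, LinearEquiv.coe_coe, LinearMap.id_apply] at h1 h2 ⊢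
    have e : ∀ (u : X ⊗[k] H) (v : Y ⊗[k] H),
        TensorProduct.rid k (X ⊗[k] Y)
          ((Coalgebra.counit (R := k) (A := H)).lTensor _ (P X Y (u ⊗ₜ v))) =
        TensorProduct.rid k X ((Coalgebra.counit (R := k) (A := H)).lTensor _ u) ⊗ₜ
        TensorProduct.rid k Y ((Coalgebra.counit (R := k) (A := H)).lTensor _ v) := by
      intro u v
      induction u with
      | zero => simp only [map_zero, TensorProduct.zero_tmul]
      | add a b ha hb => simp only [map_add, TensorProduct.add_tmul, ha, hb]
      | tmul x h =>
        induction v with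
        | zero => simp only [map_zero, TensorProduct.tmul_zero]
        | add a b ha hb => simp only [map_add, TensorProduct.tmul_add, ha, hb]
        | tmul y g => simp [TensorProduct.smul_tmul', smul_smul, mul_comm]
    rw [tensor_ρ, e, h1, h2]

end Unbundled

/-- Coefficient space. -/
noncomputable def cf (M : Comod k H) : Submodule k H := cfR M.ρ

lemma cf_eq_of_support {M : Comod k H} [FiniteDimensional k M.X] {C : Submodule k H}
    (h : IsSupport M C) : cf M = C := by
  apply le_antisymm
  · refine cfR_le fun φ x => ?_
    obtain ⟨y, hy⟩ := h.1 x
    rw [← hy]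
    clear hy
    induction y with
    | zero => simp
    | tmul x h => simpa using C.smul_mem _ h.2
    | add a b ha hb => rw [map_add, map_add]; exact C.add_mem ha hb
  · refine h.2 _ fun x => ?_
    let b := Module.finBasis k M.X
    have key : ∀ z : M.X ⊗[k] H, z = ∑ i, b i ⊗ₜ slice M.X (b.coord i) z := by
      intro z
      induction z with
      | zero => simp
      | tmul x h =>
        simp only [slice_tmul, ← TensorProduct.smul_tmul, ← TensorProduct.sum_tmul]
        rw [show ∑ i, (b.coord i) x • b i = x from b.sum_repr x]
      | add a c ha hc =>
        simp only [map_add, TensorProduct.tmul_add, Finset.sum_add_distrib]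
        rw [← ha, ← hc]
    rw [key (M.ρ x)]
    refine Submodule.sum_mem _ fun i _ => ?_
    exact ⟨b i ⊗ₜ ⟨_, slice_mem_cfR M.ρ (b.coord i) x⟩, by simp⟩

lemma DirectSummand.cf_le {S T : Comod k H} (h : DirectSummand S T) : cf S ≤ cf T := by
  obtain ⟨i, p, hi, hp, hpi⟩ := h
  refine cfR_le fun φ x => ?_
  have h1 : S.ρ x = p.rTensor H (T.ρ (i x)) := by
    have := LinearMap.congr_fun hp (i x)
    simp only [LinearMap.comp_apply] at this
    rw [← this, ← LinearMap.comp_apply p i, hpi]; rfl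
  rw [h1, slice_rTensor]
  exact slice_mem_cfR _ _ _

lemma DirectSummand.trans {S T U : Comod k H} (h : DirectSummand S T) (h' : DirectSummand T U) :
    DirectSummand S U := by
  obtain ⟨i, p, hi, hp, hpi⟩ := h
  obtain ⟨j, q, hj, hq, hqj⟩ := h'
  refine ⟨j ∘ₗ i, p ∘ₗ q, ?_, ?_, ?_⟩
  · unfold IsHom at *
    rw [← LinearMap.comp_assoc, hj, LinearMap.comp_assoc, hi, LinearMap.rTensor_comp,
      LinearMap.comp_assoc]
  · unfold IsHom at *
    rw [← LinearMap.comp_assoc, hp, LinearMap.comp_assoc, hq, LinearMap.rTensor_comp,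
      LinearMap.comp_assoc]
  · rw [LinearMap.comp_assoc, ← LinearMap.comp_assoc i, hqj, LinearMap.id_comp, hpi]

lemma Iso.symm_hom {S T : Comod k H} (e : S.X ≃ₗ[k] T.X) (h : IsHom S T e.toLinearMap) :
    IsHom T S e.symm.toLinearMap := by
  refine LinearMap.ext fun y => ?_
  have h1 := LinearMap.congr_fun h (e.symm y)
  simp only [LinearMap.comp_apply, LinearEquiv.coe_coe, LinearEquiv.apply_symm_apply] at h1 ⊢
  rw [h1, ← LinearMap.comp_apply, ← LinearMap.rTensor_comp]
  simp

lemma Iso.summand {S T : Comod k H} (h : Iso S T) : DirectSummand S T := by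
  obtain ⟨e, he⟩ := h
  exact ⟨e.toLinearMap, e.symm.toLinearMap, he, Iso.symm_hom e he, by ext; simp⟩

lemma Iso.summand' {S T : Comod k H} (h : Iso S T) : DirectSummand T S := by
  obtain ⟨e, he⟩ := h
  exact ⟨e.symm.toLinearMap, e.toLinearMap, Iso.symm_hom e he, he, by ext; simp⟩

/-- A subspace with a coaction cut out by a retraction. -/
noncomputable def res (M : Comod k H) (N : Submodule k M.X) (p : M.X →ₗ[k] N) : Comod k H where
  X := N
  ρ := p.rTensor H ∘ₗ M.ρ ∘ₗ N.subtype

lemma res_spec (M : Comod k H) (hM : M.IsComodule) (N N' : Submodule k M.X)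
    (hN : M.IsSubcomodule N) (hN' : M.IsSubcomodule N') (p : M.X →ₗ[k] N)
    (hp : ∀ x : N, p x = x) (hp' : ∀ x ∈ N', p x = 0) (hc : N ⊔ N' = ⊤) :
    (∀ x : N, N.subtype.rTensor H ((res M N p).ρ x) = M.ρ x) ∧
    (res M N p).IsComodule ∧ DirectSummand (res M N p) M := by
  have hpi : p ∘ₗ N.subtype = LinearMap.id := LinearMap.ext hp
  have h1 : ∀ x : N, N.subtype.rTensor H (p.rTensor H (M.ρ x)) = M.ρ x := by
    intro x
    obtain ⟨y, hy⟩ := hN x x.2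
    rw [← hy, ← LinearMap.comp_apply (p.rTensor H), ← LinearMap.rTensor_comp, hpi]
    simp
  have h1' : N.subtype.rTensor H ∘ₗ p.rTensor H ∘ₗ M.ρ ∘ₗ N.subtype = M.ρ ∘ₗ N.subtype :=
    LinearMap.ext h1
  have h2 : p.rTensor H ∘ₗ M.ρ = (p.rTensor H ∘ₗ M.ρ ∘ₗ N.subtype) ∘ₗ p := by
    refine LinearMap.ext fun m => ?_
    obtain ⟨a, ha, b, hb, rfl⟩ := Submodule.mem_sup.1 (hc ▸ Submodule.mem_top : m ∈ N ⊔ N')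
    obtain ⟨y, hy⟩ := hN' b hb
    have e0 : p.rTensor H (M.ρ b) = 0 := by
      rw [← hy, ← LinearMap.comp_apply, ← LinearMap.rTensor_comp,
        show p ∘ₗ N'.subtype = 0 from LinearMap.ext fun x => hp' x x.2]
      simp
    have e1 : p a = ⟨a, ha⟩ := hp ⟨a, ha⟩
    simp [e0, e1, hp' b hb]
  refine ⟨h1, ?_, N.subtype, p, h1'.symm, h2.symm, hpi⟩
  have key : IsCoR (p.rTensor H ∘ₗ M.ρ ∘ₗ N.subtype) := by
    constructor
    · have e2 : ∀ w : M.X ⊗[k] H, (TensorProduct.assoc k N H H).symm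
          ((Coalgebra.comul (R := k) (A := H)).lTensor _ (p.rTensor H w)) =
          (p.rTensor H).rTensor H ((TensorProduct.assoc k M.X H H).symm
              ((Coalgebra.comul (R := k) (A := H)).lTensor _ w)) := by
        intro w
        induction w with
        | zero => simp only [map_zero]
        | add a b ha hb => simp only [map_add, ha, hb]
        | tmul x h =>
          simp only [LinearMap.rTensor_tmul, LinearMap.lTensor_tmul]
          generalize Coalgebra.comul (R := k) h = d
          induction d with
          | zero => simp only [map_zero, TensorProduct.tmul_zero]
          | add a b ha hb => simp only [map_add, TensorProduct.tmul_add, ha, hb]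
          | tmul a b => simp
      refine LinearMap.ext fun x => ?_
      have hx := LinearMap.congr_fun hM.1 x
      simp only [LinearMap.comp_apply, LinearEquiv.coe_coe] at hx
      rw [← LinearMap.comp_assoc, ← LinearMap.rTensor_comp, ← h2, LinearMap.rTensor_comp]
      simp only [LinearMap.comp_apply, LinearEquiv.coe_coe, Submodule.subtype_apply]
      rw [e2, hx]
    · have e : ∀ w : M.X ⊗[k] H, TensorProduct.rid k N
          ((Coalgebra.counit (R := k) (A := H)).lTensor _ (p.rTensor H w)) =
          p (TensorProduct.rid k M.X ((Coalgebra.counit (R := k) (A := H)).lTensor _ w)) := by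
        intro w
        induction w with
        | zero => simp only [map_zero]
        | add a b ha hb => simp only [map_add, ha, hb]
        | tmul x h => simp
      refine LinearMap.ext fun x => ?_
      have hx := LinearMap.congr_fun hM.2 x
      simp only [LinearMap.comp_apply, LinearEquiv.coe_coe, LinearMap.id_apply,
        Submodule.subtype_apply] at hx ⊢
      rw [e, hx, hp]
  exact key

lemma cf_le_main (hcss : IsCosemisimple k H) {ι : Type} (S : ι → Comod k H)
    (hcomplete : ∀ M : Comod k H, M.IsSimple → ∃ α, Comod.Iso M (S α)) (d : ℕ) :
    ∀ T : Comod k H, T.IsComodule → FiniteDimensional k T.X → Module.finrank k T.X = d →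
      cf T ≤ ⨆ β, ⨆ (_ : DirectSummand (S β) T), cf (S β) := by
  induction d using Nat.strong_induction_on with
  | _ d ih =>
  intro T hT hfd hd
  by_cases hs : T.IsSimple
  · obtain ⟨α, hα⟩ := hcomplete T hs
    exact hα.summand.cf_le.trans (le_iSup₂_of_le α hα.summand' le_rfl)
  rcases subsingleton_or_nontrivial T.X with hsub | hnt
  · refine cfR_le fun φ x => ?_
    rw [Subsingleton.elim x 0, map_zero, map_zero]
    exact zero_mem _
  have : ∃ N : Submodule k T.X, T.IsSubcomodule N ∧ N ≠ ⊥ ∧ N ≠ ⊤ := by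
    by_contra! hcon
    refine hs ⟨hT, hnt, hfd, fun N hN => ?_⟩
    by_cases h : N = ⊥
    · exact Or.inl h
    · exact Or.inr (hcon N hN h)
  obtain ⟨N, hN, hNb, hNt⟩ := this
  obtain ⟨N', hN', hc⟩ := hcss T hT N hN
  have hNt' : N' ≠ ⊤ := by
    rintro rfl
    exact hNb (by simpa using hc.disjoint.eq_bot)
  obtain ⟨a1, a2, a3⟩ := res_spec T hT N N' hN hN' (N.projectionOnto N' hc)
    (fun x => Submodule.projectionOnto_apply_left hc x)
    (fun x hx => Submodule.projectionOnto_apply_right hc ⟨x, hx⟩) hc.sup_eq_top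
  obtain ⟨b1, b2, b3⟩ := res_spec T hT N' N hN' hN (N'.projectionOnto N hc.symm)
    (fun x => Submodule.projectionOnto_apply_left hc.symm x)
    (fun x hx => Submodule.projectionOnto_apply_right hc.symm ⟨x, hx⟩) hc.symm.sup_eq_top
  have ca := ih _ (hd ▸ Submodule.finrank_lt hNt) _ a2
    (inferInstanceAs (FiniteDimensional k N)) rfl
  have cb := ih _ (hd ▸ Submodule.finrank_lt hNt') _ b2
    (inferInstanceAs (FiniteDimensional k N')) rfl
  refine cfR_le fun φ x => ?_
  obtain ⟨a, ha, b, hb, rfl⟩ := Submodule.mem_sup.1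
    (hc.sup_eq_top ▸ Submodule.mem_top : x ∈ N ⊔ N')
  rw [map_add, map_add]
  refine Submodule.add_mem _ ?_ ?_
  · have e := a1 ⟨a, ha⟩
    have e' : slice T.X φ (T.ρ a) ∈ cf (res T N (N.projectionOnto N' hc)) := by
      change _ = T.ρ a at e
      rw [← e]
      erw [slice_rTensor]
      exact slice_mem_cfR (res T N (N.projectionOnto N' hc)).ρ _ _
    refine (ca.trans ?_) e'
    exact iSup₂_le fun β hβ => le_iSup₂_of_le β (hβ.trans a3) le_rfl
  · have e := b1 ⟨b, hb⟩
    have e' : slice T.X φ (T.ρ b) ∈ cf (res T N' (N'.projectionOnto N hc.symm)) := by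
      change _ = T.ρ b at e
      rw [← e]
      erw [slice_rTensor]
      exact slice_mem_cfR (res T N' (N'.projectionOnto N hc.symm)).ρ _ _
    refine (cb.trans ?_) e'
    exact iSup₂_le fun β hβ => le_iSup₂_of_le β (hβ.trans b3) le_rfl

lemma tpow_spec (M : Comod k H) (hM : M.IsComodule) (hfd : FiniteDimensional k M.X) (n : ℕ) :
    (M.tpow (n + 1)).IsComodule ∧ FiniteDimensional k (M.tpow (n + 1)).X ∧
      cf (M.tpow (n + 1)) = cf M ^ (n + 1) := by
  induction n with
  | zero => exact ⟨hM, hfd, (pow_one _).symm⟩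
  | succ n ih =>
    obtain ⟨h1, h2, h3⟩ := ih
    refine ⟨tensor_isComodule h1 hM,
      inferInstanceAs (FiniteDimensional k ((M.tpow (n + 1)).X ⊗[k] M.X)), ?_⟩
    rw [pow_succ _ (n + 1), ← h3]
    exact cf_tensor _ _

end Comod

/-- Corollary 2.4 of the paper.  With `H`, the simple
comodules `S_α`, the simple subcoalgebras `C_α` and `V = ⊕_{α ∈ F} C_α` as
before, for every `n ≥ 1` one has
`dim_k V^n = Σ_{β ∈ F_n} (dim_k S_β)²`, where
`F_n = {β : S_β is a direct summand of (⊕_{α ∈ F} S_α)^{⊗ n}}`. -/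
theorem stmt1 (k : Type) [Field k] [IsAlgClosed k]
    (H : Type) [Ring H] [HopfAlgebra k H]
    (hcss : IsCosemisimple k H)
    (ι : Type) (S : ι → Comod k H)
    (hS : ∀ α, (S α).IsSimple)
    (hdistinct : ∀ α β, Comod.Iso (S α) (S β) → α = β)
    (hcomplete : ∀ M : Comod k H, M.IsSimple → ∃ α, Comod.Iso M (S α))
    (C : ι → Submodule k H)
    (hCsimple : ∀ α, IsSimpleSubcoalgebra k H (C α))
    (hsupp : ∀ α, Comod.IsSupport (S α) (C α))
    (hCdim : ∀ α, Module.finrank k ↥(C α) = (Module.finrank k (S α).X) ^ 2)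
    (hindep : iSupIndep C) (hdecomp : (⨆ α, C α) = ⊤)
    (F : Finset ι) (n : ℕ) (hn : 1 ≤ n)
    (Fn : Finset ι)
    (hFn : ∀ β : ι, β ∈ Fn ↔ Comod.DirectSummand (S β)
        ((Comod.pi (fun a : ↥F => S a.1)).tpow n)) :
    Module.finrank k ↥((∑ α ∈ F, C α) ^ n) =
      ∑ β ∈ Fn, (Module.finrank k (S β).X) ^ 2 := by
  obtain ⟨n, rfl⟩ : ∃ m, n = m + 1 := ⟨n - 1, by omega⟩
  have hfdS : ∀ α, FiniteDimensional k (S α).X := fun α => (hS α).2.2.1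
  have hcfS : ∀ α, Comod.cf (S α) = C α := fun α => by
    have := hfdS α
    exact Comod.cf_eq_of_support (hsupp α)
  have hfdC : ∀ α, FiniteDimensional k (C α) := fun α => by
    have := hfdS α
    have := (hS α).2.1
    refine Module.finite_of_finrank_pos ?_
    rw [hCdim]
    exact pow_pos Module.finrank_pos 2
  have hpi : (Comod.pi (fun a : ↥F => S a.1)).IsComodule :=
    Comod.pi_isComodule (fun a : ↥F => (S a.1).ρ) (fun a => (hS a.1).1)
  have hpif : FiniteDimensional k (Comod.pi (fun a : ↥F => S a.1)).X :=
    inferInstanceAs (FiniteDimensional k (∀ a : ↥F, (S a.1).X))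
  have hcfpi : Comod.cf (Comod.pi (fun a : ↥F => S a.1)) = ∑ α ∈ F, C α := by
    have h : Comod.cf (Comod.pi (fun a : ↥F => S a.1)) = ⨆ a : ↥F, Comod.cf (S a.1) :=
      Comod.cf_pi (fun a : ↥F => (S a.1).ρ)
    simp only [h, hcfS]
    have h2 : ∀ G : Finset ι, ∑ α ∈ G, C α = G.sup C := by
      classical
      intro G
      induction G using Finset.induction_on with
      | empty => simp
      | insert a G ha ih => rw [Finset.sum_insert ha, Finset.sup_insert, ih]; rfl
    rw [h2, Finset.sup_eq_iSup, iSup_subtype]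
  obtain ⟨h1, h2, h3⟩ := Comod.tpow_spec _ hpi hpif n
  have hW : (∑ α ∈ F, C α) ^ (n + 1) = ⨆ β : ↥Fn, C β.1 := by
    rw [← hcfpi, ← h3]
    apply le_antisymm
    · refine (Comod.cf_le_main hcss S hcomplete _ _ h1 h2 rfl).trans ?_
      refine iSup₂_le fun β hβ => ?_
      rw [hcfS]
      exact le_iSup (fun β : ↥Fn => C β.1) ⟨β, (hFn β).2 hβ⟩
    · refine iSup_le fun β => ?_
      rw [← hcfS]
      exact ((hFn β.1).1 β.2).cf_le
  rw [hW, iSup_subtype, ← Finset.sup_eq_iSup]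
  simp only [← hCdim]
  clear hW hFn
  classical
  induction Fn using Finset.induction_on with
  | empty => simp
  | insert a G ha ih =>
    rw [Finset.sum_insert ha, Finset.sup_insert, ← ih]
    have hd : Disjoint (C a) (G.sup C) :=
      (hindep.supIndep' (insert a G)) (Finset.subset_insert a G) (Finset.mem_insert_self a G) ha
    have : FiniteDimensional k ↥(G.sup C) := Submodule.finiteDimensional_finset_sup G C
    have := Submodule.finrank_sup_add_finrank_inf_eq (C a) (G.sup C)
    rw [hd.eq_bot, finrank_bot, add_zero] at this
    exact this
end

section
/- Let G be a linearly reductive affine algebraic group over an algebraically closed field k and let H be a finitely generated cosemisimple Hopf algebra that is a quantum function algebra on G, i.e. (R_+(H), d_H) ≅ (R_+(G), d_G). Then GKdim H = dim G, the dimension of G as an algebraic variety. -/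
/-!
Background definitions: comodules over a Hopf algebra, simple comodules, direct
summands, supports, subcoalgebras, cosemisimplicity, Gelfand-Kirillov dimension,
and (measured) Grothendieck semirings of cosemisimple Hopf algebras.
-/

open TensorProduct

section GKpart

open Filter Topology

theorem gk_limsup_le (u : ℕ → ℕ) (C s : ℕ) (hC : 1 ≤ C) (h : ∀ n, 1 ≤ n → u n ≤ C * n ^ s) :
    limsup (fun n : ℕ => ENNReal.ofReal (Real.log (u n) / Real.log n)) atTop ≤ s := by
  have h1 : ∀ᶠ n : ℕ in atTop, ENNReal.ofReal (Real.log (u n) / Real.log n) ≤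
      ENNReal.ofReal (Real.log C / Real.log n + s) := by
    filter_upwards [eventually_ge_atTop 2] with n hn
    apply ENNReal.ofReal_le_ofReal
    have hn' : (1 : ℝ) < n := by exact_mod_cast hn
    have hl : 0 < Real.log n := Real.log_pos hn'
    have hCr : (1 : ℝ) ≤ C := by exact_mod_cast hC
    rw [div_le_iff₀ hl, add_mul, div_mul_cancel₀ _ hl.ne']
    rcases Nat.eq_zero_or_pos (u n) with h0 | h0
    · rw [h0]; simp only [Nat.cast_zero, Real.log_zero]
      have := Real.log_nonneg hCr
      positivity
    · have h2 : (u n : ℝ) ≤ C * (n : ℝ) ^ s := by exact_mod_cast h n (by omega)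
      calc Real.log (u n) ≤ Real.log (C * (n : ℝ) ^ s) :=
            Real.log_le_log (by exact_mod_cast h0) h2
        _ = _ := by rw [Real.log_mul (by positivity) (by positivity), Real.log_pow]
  have h2 : Tendsto (fun n : ℕ => ENNReal.ofReal (Real.log C / Real.log n + s)) atTop
      (𝓝 (s : ENNReal)) := by
    have : Tendsto (fun n : ℕ => Real.log C / Real.log n + s) atTop (𝓝 (0 + (s : ℝ))) := by
      apply Tendsto.add_const
      exact Tendsto.const_div_atTop (Real.tendsto_log_atTop.comp tendsto_natCast_atTop_atTop) _
    have h3 := ENNReal.tendsto_ofReal this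
    simpa using h3
  calc _ ≤ _ := limsup_le_limsup h1
    _ = _ := h2.limsup_eq

theorem gk_le_limsup (u : ℕ → ℕ) (s : ℕ) (h : ∀ n, n ^ s ≤ u n) :
    s ≤ limsup (fun n : ℕ => ENNReal.ofReal (Real.log (u n) / Real.log n)) atTop := by
  apply le_limsup_of_frequently_le'
  apply Eventually.frequently
  filter_upwards [eventually_ge_atTop 2] with n hn
  have hn' : (1 : ℝ) < n := by exact_mod_cast hn
  have hl : 0 < Real.log n := Real.log_pos hn'
  rw [← ENNReal.ofReal_natCast]
  apply ENNReal.ofReal_le_ofReal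
  rw [le_div_iff₀ hl, ← Real.log_pow]
  apply Real.log_le_log (by positivity)
  exact_mod_cast h n

theorem gk_krull_eq {A B : Type*} [CommRing A] [CommRing B] [Algebra B A]
    [Algebra.IsIntegral B A] (hinj : Function.Injective (algebraMap B A)) :
    ringKrullDim A = ringKrullDim B := by
  apply le_antisymm
  · refine Order.krullDim_le_of_strictMono (PrimeSpectrum.comap (algebraMap B A)) ?_
    intro p q hpq
    exact Ideal.IsIntegral.comap_lt_comap (R := B) (I := p.asIdeal) (J := q.asIdeal) hpq
  · have key : ∀ l : LTSeries (PrimeSpectrum B), ∃ L : LTSeries (PrimeSpectrum A),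
        L.length = l.length ∧ PrimeSpectrum.comap (algebraMap B A) L.last = l.last := by
      intro l
      induction l using RelSeries.inductionOn' with
      | singleton x =>
        have : FaithfulSMul B A := (faithfulSMul_iff_algebraMap_injective B A).2 hinj
        obtain ⟨y, hy⟩ := Algebra.IsIntegral.comap_surjective B A x
        exact ⟨RelSeries.singleton _ y, rfl, hy⟩
      | snoc p x hx ih =>
        obtain ⟨L, h1, h2⟩ := ih
        obtain ⟨Q, hQ, hQp, hQc⟩ := Ideal.exists_ideal_over_prime_of_isIntegral_of_isPrime
          x.asIdeal L.last.asIdeal (by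
            have := congrArg PrimeSpectrum.asIdeal h2
            rw [PrimeSpectrum.comap_asIdeal] at this
            rw [this]; exact le_of_lt hx)
        refine ⟨L.snoc ⟨Q, hQp⟩ ?_, ?_, ?_⟩
        · refine lt_of_le_of_ne hQ ?_
          intro h
          have h3 : PrimeSpectrum.comap (algebraMap B A) L.last = x := by
            apply PrimeSpectrum.ext; rw [PrimeSpectrum.comap_asIdeal, h]; exact hQc
          rw [h2] at h3
          exact (ne_of_lt (show p.last < x from hx)) h3
        · simp [h1]
        · rw [RelSeries.last_snoc, RelSeries.last_snoc]
          exact PrimeSpectrum.ext hQc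
    refine iSup_le fun l => ?_
    obtain ⟨L, h1, -⟩ := key l
    rw [← h1]
    exact Order.LTSeries.length_le_krullDim L

open MvPolynomial in
theorem gk_finrank_restrictDegree (k : Type*) [Field k] (s m : ℕ) :
    Module.finrank k (restrictDegree (Fin s) k m) = (m + 1) ^ s := by
  have e : {n : Fin s →₀ ℕ | ∀ i, n i ≤ m} ≃ (Fin s → Fin (m + 1)) :=
    { toFun := fun n i => ⟨n.1 i, Nat.lt_succ_of_le (n.2 i)⟩
      invFun := fun g => ⟨Finsupp.equivFunOnFinite.symm (fun i => (g i : ℕ)),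
        fun i => Nat.le_of_lt_succ (g i).2⟩
      left_inv := fun n => by ext i; rfl
      right_inv := fun g => by ext i; rfl }
  have b := (basisRestrictSupport k {n : Fin s →₀ ℕ | ∀ i, n i ≤ m}).reindex e
  have := Module.finrank_eq_card_basis b
  rw [restrictDegree, this]
  simp

open MvPolynomial Pointwise in
theorem gk_restrictDegree_mul (k : Type*) [Field k] (s m n : ℕ) :
    restrictDegree (Fin s) k (m + n) = restrictDegree (Fin s) k m * restrictDegree (Fin s) k n := by
  rw [restrictDegree, restrictDegree, restrictDegree, ← restrictSupport_add]
  congr 1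
  ext x
  simp only [Set.mem_ofPred_eq, Set.mem_add]
  constructor
  · intro h
    refine ⟨Finsupp.equivFunOnFinite.symm (fun i => min (x i) m), fun i => ?_,
      Finsupp.equivFunOnFinite.symm (fun i => x i - m), fun i => ?_, ?_⟩
    · simp
    · have := h i
      simp; omega
    · ext i; simp; omega
  · rintro ⟨y, hy, z, hz, rfl⟩ i
    exact add_le_add (hy i) (hz i)

open MvPolynomial in
theorem gk_restrictDegree_pow_ge (k : Type*) [Field k] (s n : ℕ) :
    restrictDegree (Fin s) k 1 ^ n = restrictDegree (Fin s) k n := by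
  induction n with
  | zero =>
    rw [pow_zero, restrictDegree, ← restrictSupport_zero]
    congr 1
    ext x
    simp [Finsupp.ext_iff]
  | succ n ih => rw [pow_succ, ih, gk_restrictDegree_mul]

theorem gk_finrank_mul_le {k A : Type*} [Field k] [Ring A] [Algebra k A] (M N : Submodule k A)
    [FiniteDimensional k M] [FiniteDimensional k N] :
    Module.finrank k ↥(M * N) ≤ Module.finrank k M * Module.finrank k N := by
  rw [← Submodule.mulMap_range, ← Module.finrank_tensorProduct]
  exact LinearMap.finrank_range_le _

theorem gk_mem_of_fg {k A : Type*} [Field k] [Ring A] [Algebra k A] (F : ℕ → Submodule k A)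
    (hF : Monotone F) (hx : ∀ x, ∃ m, x ∈ F m) (V : Submodule k A) [FiniteDimensional k V] :
    ∃ m, V ≤ F m := by
  have hV : V.FG := Submodule.fg_iff_finiteDimensional V |>.2 inferInstance
  obtain ⟨t, rfl⟩ := hV
  choose m hm using hx
  refine ⟨t.sup m, Submodule.span_le.2 fun x hx => ?_⟩
  exact hF (Finset.le_sup hx) (hm x)

open MvPolynomial in
theorem gkdim_comm (k A : Type) [Field k] [CommRing A] [Algebra k A] [Algebra.FiniteType k A]
    (d : ℕ) (hd : ringKrullDim A = d) : GKdim k A = d := by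
  have hnt : Nontrivial A := by
    by_contra h
    rw [not_nontrivial_iff_subsingleton] at h
    rw [ringKrullDim_eq_bot_of_subsingleton] at hd
    exact absurd hd (by simp)
  obtain ⟨s, g, hg, hfin⟩ := exists_finite_inj_algHom_of_fg k A
  have hs : s = d := by
    let _ := g.toRingHom.toAlgebra
    have : Module.Finite (MvPolynomial (Fin s) k) A := hfin
    have h1 := gk_krull_eq (A := A) (B := MvPolynomial (Fin s) k) hg
    rw [hd, MvPolynomial.ringKrullDim_of_isNoetherianRing, ringKrullDim_eq_zero_of_field] at h1
    simp at h1
    exact_mod_cast h1.symm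
  subst hs
  set E : ℕ → Submodule k A := fun m => (restrictDegree (Fin s) k m).map g.toLinearMap with hE
  have hEmul : ∀ m n, E m * E n = E (m + n) := fun m n => by
    simp only [hE]
    rw [gk_restrictDegree_mul, Submodule.map_mul]
  have hEfin : ∀ m, FiniteDimensional k (E m) := fun m => inferInstance
  have hErank : ∀ m, Module.finrank k (E m) = (m + 1) ^ s := fun m => by
    rw [← gk_finrank_restrictDegree k s m]
    exact (Submodule.equivMapOfInjective g.toLinearMap hg _).finrank_eq.symm
  have hEmono : Monotone E := fun m n h => Submodule.map_mono
    (restrictSupport_mono _ fun x hx i => (hx i).trans h)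
  have hEmem : ∀ p, ∃ m, g p ∈ E m := fun p => by
    refine ⟨p.totalDegree, Submodule.mem_map_of_mem ?_⟩
    apply restrictTotalDegree_le_restrictDegree
    rw [mem_restrictTotalDegree]
  apply le_antisymm
  · refine iSup_le fun V => iSup_le fun hV => ?_
    obtain ⟨t, ht⟩ : ∃ t : Finset A, ∀ x : A, ∃ m, x ∈ E m * Submodule.span k (t : Set A) := by
      let _ := g.toRingHom.toAlgebra
      have : Module.Finite (MvPolynomial (Fin s) k) A := hfin
      obtain ⟨t, ht⟩ := (Module.Finite.fg_top : (⊤ : Submodule (MvPolynomial (Fin s) k) A).FG)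
      refine ⟨t, fun x => ?_⟩
      have hx : x ∈ Submodule.span (MvPolynomial (Fin s) k) (t : Set A) := by rw [ht]; trivial
      induction hx using Submodule.span_induction with
      | mem x hx =>
        obtain ⟨m, hm⟩ := hEmem 1
        exact ⟨m, by simpa using Submodule.mul_mem_mul hm (Submodule.subset_span hx)⟩
      | zero => exact ⟨0, zero_mem _⟩
      | add x y _ _ hx hy =>
        obtain ⟨m, hm⟩ := hx
        obtain ⟨n, hn⟩ := hy
        exact ⟨max m n, add_mem (mul_le_mul' (hEmono (le_max_left _ _)) le_rfl hm)
          (mul_le_mul' (hEmono (le_max_right _ _)) le_rfl hn)⟩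
      | smul p x _ hx =>
        obtain ⟨m, hm⟩ := hx
        obtain ⟨n, hn⟩ := hEmem p
        refine ⟨n + m, ?_⟩
        rw [← hEmul, mul_assoc]
        exact Submodule.mul_mem_mul hn hm
    set W := Submodule.span k (t : Set A) with hW
    have hWfin : FiniteDimensional k W := inferInstance
    have hmono : Monotone (fun m => E m * W) := fun m n h => mul_le_mul' (hEmono h) le_rfl
    have hfm : ∀ M N : Submodule k A, FiniteDimensional k M → FiniteDimensional k N →
        FiniteDimensional k ↥(M * N) := fun M N _ _ => by
      rw [← Submodule.mulMap_range]; infer_instance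
    have := hfm W W inferInstance inferInstance
    have := fun m => hfm (E m) W inferInstance inferInstance
    obtain ⟨r1, hr1⟩ := gk_mem_of_fg _ hmono ht V
    obtain ⟨r2, hr2⟩ := gk_mem_of_fg _ hmono ht (W * W)
    obtain ⟨r3, hr3⟩ := ht 1
    have hpow : ∀ n, V ^ n ≤ E (r3 + n * (r1 + r2)) * W := by
      intro n
      induction n with
      | zero =>
        rw [pow_zero, Submodule.one_le]; simpa using hr3
      | succ n ih =>
        rw [pow_succ]
        calc V ^ n * V ≤ (E (r3 + n * (r1 + r2)) * W) * (E r1 * W) := mul_le_mul' ih hr1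
          _ = E (r3 + n * (r1 + r2)) * E r1 * (W * W) := by
            rw [mul_mul_mul_comm]
          _ ≤ E (r3 + n * (r1 + r2)) * E r1 * (E r2 * W) := mul_le_mul' le_rfl hr2
          _ = _ := by
            rw [← mul_assoc, hEmul, hEmul]; congr 2; ring
    refine gk_limsup_le _ ((r3 + (r1 + r2) + 1) ^ s * Module.finrank k W + 1) s (by omega) ?_
    intro n hn
    calc Module.finrank k ↥(V ^ n) ≤ Module.finrank k ↥(E (r3 + n * (r1 + r2)) * W) :=
          Submodule.finrank_mono (hpow n)
      _ ≤ (r3 + n * (r1 + r2) + 1) ^ s * Module.finrank k W := by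
          rw [← hErank]; exact gk_finrank_mul_le _ _
      _ ≤ ((r3 + (r1 + r2) + 1) * n) ^ s * Module.finrank k W := by
          gcongr; nlinarith
      _ ≤ _ := by
          rw [mul_pow]; nlinarith [Nat.zero_le (n ^ s)]
  · refine le_iSup_of_le (E 1) (le_iSup_of_le (hEfin 1) ?_)
    apply gk_le_limsup
    intro n
    have : E 1 ^ n = E n := by
      simp only [hE]
      rw [← Submodule.map_pow, gk_restrictDegree_pow_ge]
    rw [this, hErank]
    gcongr; omega

end GKpart


section Contractions

variable {k : Type} [Field k] {H : Type} [Ring H] [HopfAlgebra k H]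
variable {X Y : Type} [AddCommGroup X] [Module k X] [AddCommGroup Y] [Module k Y]

/-- Contract the right tensor factor with a functional. -/
noncomputable def ctrR (ψ : Module.Dual k H) : X ⊗[k] H →ₗ[k] X :=
  (TensorProduct.rid k X).toLinearMap ∘ₗ ψ.lTensor X

/-- Contract the left tensor factor with a functional. -/
noncomputable def ctrL (φ : Module.Dual k X) : X ⊗[k] H →ₗ[k] H :=
  (TensorProduct.lid k H).toLinearMap ∘ₗ φ.rTensor H

@[simp] theorem ctrR_tmul (ψ : Module.Dual k H) (x : X) (h : H) :
    ctrR ψ (x ⊗ₜ[k] h) = ψ h • x := by simp [ctrR]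

@[simp] theorem ctrL_tmul (φ : Module.Dual k X) (x : X) (h : H) :
    ctrL φ (x ⊗ₜ[k] h) = φ x • h := by simp [ctrL]

theorem ctrL_ctrR (φ : Module.Dual k X) (ψ : Module.Dual k H) (t : X ⊗[k] H) :
    φ (ctrR ψ t) = ψ (ctrL φ t) := by
  induction t with
  | zero => simp
  | tmul x h => simp [mul_comm]
  | add a b ha hb => simp [ha, hb]

theorem ctrR_add (ψ ψ' : Module.Dual k H) (t : X ⊗[k] H) :
    ctrR (ψ + ψ') t = ctrR ψ t + ctrR ψ' t := by
  simp [ctrR, LinearMap.lTensor_add]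

theorem ctrR_smul (c : k) (ψ : Module.Dual k H) (t : X ⊗[k] H) :
    ctrR (c • ψ) t = c • ctrR ψ t := by
  simp [ctrR, LinearMap.lTensor_smul]

theorem ctrL_add (ψ ψ' : Module.Dual k X) (t : X ⊗[k] H) :
    ctrL (ψ + ψ') t = ctrL ψ t + ctrL ψ' t := by
  simp [ctrL, LinearMap.rTensor_add]

theorem ctrL_smul (c : k) (ψ : Module.Dual k X) (t : X ⊗[k] H) :
    ctrL (c • ψ) t = c • ctrL ψ t := by
  simp [ctrL, LinearMap.rTensor_smul]

theorem ctrR_rTensor (f : X →ₗ[k] Y) (ψ : Module.Dual k H) (t : X ⊗[k] H) :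
    ctrR ψ (f.rTensor H t) = f (ctrR ψ t) := by
  induction t with
  | zero => simp
  | tmul x h => simp
  | add a b ha hb => simp [ha, hb]

theorem ctrL_rTensor (f : X →ₗ[k] Y) (φ : Module.Dual k Y) (t : X ⊗[k] H) :
    ctrL φ (f.rTensor H t) = ctrL (φ ∘ₗ f) t := by
  induction t with
  | zero => simp
  | tmul x h => simp
  | add a b ha hb => simp [ha, hb]

theorem ctrR_separates (t : X ⊗[k] H) (h : ∀ ψ : Module.Dual k H, ctrR ψ t = 0) : t = 0 := by
  classical
  let b := Module.Basis.ofVectorSpace k H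
  apply (TensorProduct.equivFinsuppOfBasisRight (M := X) b).injective
  ext i
  have key : ∀ t : X ⊗[k] H,
      TensorProduct.equivFinsuppOfBasisRight (M := X) b t i = ctrR (b.coord i) t := by
    intro t
    induction t with
    | zero => simp
    | tmul x h => simp [TensorProduct.equivFinsuppOfBasisRight_apply_tmul_apply]
    | add a b ha hb => simp [ha, hb]
  rw [key, h, map_zero]; rfl

theorem ctrR_ext {t u : X ⊗[k] H} (h : ∀ ψ : Module.Dual k H, ctrR ψ t = ctrR ψ u) : t = u := by
  rw [← sub_eq_zero]
  apply ctrR_separates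
  intro ψ
  rw [map_sub, h, sub_self]

theorem ctrR_range_fd (t : X ⊗[k] H) :
    ∃ F : Submodule k X, FiniteDimensional k F ∧ ∀ ψ : Module.Dual k H, ctrR ψ t ∈ F := by
  induction t with
  | zero => exact ⟨⊥, inferInstance, by simp⟩
  | tmul x h =>
    exact ⟨Submodule.span k {x}, inferInstance, fun ψ => by
      rw [ctrR_tmul]; exact Submodule.smul_mem _ _ (Submodule.mem_span_singleton_self x)⟩
  | add a b ha hb =>
    obtain ⟨F, hF, h1⟩ := ha
    obtain ⟨G, hG, h2⟩ := hb
    exact ⟨F ⊔ G, inferInstance, fun ψ => by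
      rw [map_add]
      exact add_mem (Submodule.mem_sup_left (h1 ψ)) (Submodule.mem_sup_right (h2 ψ))⟩

/-- Convolution product of functionals. -/
noncomputable def dconv (ψ ψ' : Module.Dual k H) : Module.Dual k H :=
  LinearMap.mul' k k ∘ₗ TensorProduct.map ψ ψ' ∘ₗ Coalgebra.comul

theorem ctrR_dconv (ψ ψ' : Module.Dual k H) (t : X ⊗[k] H) :
    ctrR ψ (ctrR ψ' ((TensorProduct.assoc k X H H).symm
      ((Coalgebra.comul (R := k) (A := H)).lTensor X t))) = ctrR (dconv ψ ψ') t := by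
  induction t with
  | zero => simp
  | tmul x h =>
    simp only [LinearMap.lTensor_tmul, ctrR_tmul, dconv, LinearMap.comp_apply]
    generalize Coalgebra.comul (R := k) h = c
    induction c with
    | zero => simp
    | tmul a b => simp [smul_smul, mul_comm]
    | add a b ha hb => simp only [TensorProduct.tmul_add, map_add, ha, hb, add_smul]
  | add a b ha hb => simp only [map_add, ha, hb]

/-- The multiplication map `(X ⊗ H) × (Y ⊗ H) → (X ⊗ Y) ⊗ H`. -/
noncomputable def tmerge : (X ⊗[k] H) ⊗[k] (Y ⊗[k] H) →ₗ[k] (X ⊗[k] Y) ⊗[k] H :=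
  (LinearMap.mul' k H).lTensor (X ⊗[k] Y)
        ∘ₗ (TensorProduct.tensorTensorTensorComm k X H Y H).toLinearMap

@[simp] theorem tmerge_tmul (x : X) (y : Y) (h g : H) :
    tmerge ((x ⊗ₜ[k] h) ⊗ₜ[k] (y ⊗ₜ[k] g)) = (x ⊗ₜ[k] y) ⊗ₜ[k] (h * g) := by
  simp [tmerge]

theorem ctrL_tmerge (φ : Module.Dual k X) (χ : Module.Dual k Y) (t : X ⊗[k] H) (u : Y ⊗[k] H) :
    ctrL (TensorProduct.dualDistrib k X Y (φ ⊗ₜ χ)) (tmerge (t ⊗ₜ[k] u)) =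
      ctrL φ t * ctrL χ u := by
  induction t with
  | zero => simp
  | add a b ha hb => simp only [TensorProduct.add_tmul, map_add, ha, hb, add_mul]
  | tmul x h =>
    induction u with
    | zero => simp
    | add a b ha hb => simp only [TensorProduct.tmul_add, map_add, ha, hb, mul_add]
    | tmul y g => simp [smul_smul, mul_comm]

end Contractions

namespace Comod

variable {k : Type} [Field k] {H : Type} [Ring H] [HopfAlgebra k H]

/-- Matrix coefficients. -/
noncomputable def coef (M : Comod k H) : Module.Dual k M.X →ₗ[k] M.X →ₗ[k] H :=
  LinearMap.mk₂ k (fun φ x => ctrL φ (M.ρ x)) (fun a b x => ctrL_add a b _)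
    (fun c a x => ctrL_smul c a _) (fun a x y => by simp) (fun c a x => by simp)

/-- Action of functionals. -/
noncomputable def act (M : Comod k H) : Module.Dual k H →ₗ[k] Module.End k M.X :=
  LinearMap.mk₂ k (fun ψ x => ctrR ψ (M.ρ x)) (fun a b x => ctrR_add a b _)
    (fun c a x => ctrR_smul c a _) (fun a x y => by simp) (fun c a x => by simp)

theorem coef_apply (M : Comod k H) (φ : Module.Dual k M.X) (x : M.X) :
    M.coef φ x = ctrL φ (M.ρ x) := rfl

theorem act_apply (M : Comod k H) (ψ : Module.Dual k H) (x : M.X) :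
    M.act ψ x = ctrR ψ (M.ρ x) := rfl

theorem apply_act (M : Comod k H) (φ : Module.Dual k M.X) (ψ : Module.Dual k H) (x : M.X) :
    φ (M.act ψ x) = ψ (M.coef φ x) := ctrL_ctrR _ _ _

theorem IsHom.apply {M N : Comod k H} {f : M.X →ₗ[k] N.X} (hf : IsHom M N f) (x : M.X) :
    N.ρ (f x) = f.rTensor H (M.ρ x) := LinearMap.congr_fun hf x

theorem IsHom.coef {M N : Comod k H} {f : M.X →ₗ[k] N.X} (hf : IsHom M N f)
    (φ : Module.Dual k N.X) (x : M.X) : N.coef φ (f x) = M.coef (φ ∘ₗ f) x := by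
  rw [coef_apply, hf.apply, ctrL_rTensor, coef_apply]

theorem isHom_of_act {M N : Comod k H} (f : M.X →ₗ[k] N.X)
    (h : ∀ ψ x, f (M.act ψ x) = N.act ψ (f x)) : IsHom M N f := by
  ext x
  apply ctrR_ext
  intro ψ
  rw [LinearMap.comp_apply, LinearMap.comp_apply, ctrR_rTensor]
  exact (h ψ x).symm

theorem isSubcomodule_of_act (M : Comod k H) (N : Submodule k M.X)
    (h : ∀ ψ, ∀ x ∈ N, M.act ψ x ∈ N) : M.IsSubcomodule N := by
  intro x hx
  have h1 : N.mkQ.rTensor H (M.ρ x) = 0 := by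
    apply ctrR_separates
    intro ψ
    rw [ctrR_rTensor]
    exact (Submodule.Quotient.mk_eq_zero N).2 (h ψ x hx)
  have h2 : Function.Exact (N.subtype.rTensor H) (N.mkQ.rTensor H) :=
    rTensor_exact H (LinearMap.exact_subtype_mkQ N) (Submodule.mkQ_surjective N)
  exact (h2 _).1 h1

theorem IsComodule.act_act {M : Comod k H} (hM : M.IsComodule) (ψ ψ' : Module.Dual k H)
    (x : M.X) : M.act ψ (M.act ψ' x) = M.act (dconv ψ ψ') x := by
  have h := LinearMap.congr_fun hM.1 x
  simp only [LinearMap.comp_apply, LinearEquiv.coe_coe] at h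
  rw [act_apply, act_apply, act_apply, ← ctrR_dconv, ← h, ctrR_rTensor]

theorem IsComodule.act_counit {M : Comod k H} (hM : M.IsComodule) (x : M.X) :
    M.act (Coalgebra.counit (R := k) (A := H)) x = x := LinearMap.congr_fun hM.2 x

/-- Coefficient space. -/
noncomputable def C (M : Comod k H) : Submodule k H :=
  LinearMap.range (TensorProduct.lift M.coef)

theorem coef_mem (M : Comod k H) (φ : Module.Dual k M.X) (x : M.X) : M.coef φ x ∈ M.C :=
  ⟨φ ⊗ₜ x, by simp⟩

theorem C_le {M : Comod k H} {P : Submodule k H} (h : ∀ φ x, M.coef φ x ∈ P) : M.C ≤ P := by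
  rintro _ ⟨t, rfl⟩
  induction t with
  | zero => simp
  | tmul φ x => simpa using h φ x
  | add a b ha hb => rw [map_add]; exact add_mem ha hb

instance C_fd (M : Comod k H) [FiniteDimensional k M.X] : FiniteDimensional k M.C := by
  unfold C; infer_instance

theorem C_le_of_injective {M N : Comod k H} {f : M.X →ₗ[k] N.X} (hf : IsHom M N f)
    (hinj : Function.Injective f) : M.C ≤ N.C := by
  apply C_le
  intro φ x
  obtain ⟨g, hg⟩ := LinearMap.exists_leftInverse_of_injective f (LinearMap.ker_eq_bot.2 hinj)
  have : φ = (φ ∘ₗ g) ∘ₗ f := by rw [LinearMap.comp_assoc, hg, LinearMap.comp_id]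
  rw [this, ← hf.coef]
  exact coef_mem _ _ _

theorem Iso.symm {M N : Comod k H} (h : Iso M N) : Iso N M := by
  obtain ⟨e, he⟩ := h
  refine ⟨e.symm, isHom_of_act _ fun ψ x => ?_⟩
  obtain ⟨y, rfl⟩ := e.surjective x
  have h1 : N.act ψ (e y) = e (M.act ψ y) := by
    rw [act_apply, act_apply]
    have := he.apply y
    simp only [LinearEquiv.coe_coe] at this
    rw [this, ctrR_rTensor]; rfl
  simp [h1]

theorem Iso.C_eq {M N : Comod k H} (h : Iso M N) : M.C = N.C := by
  apply le_antisymm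
  · obtain ⟨e, he⟩ := h
    exact C_le_of_injective he e.injective
  · obtain ⟨e, he⟩ := h.symm
    exact C_le_of_injective he e.injective

theorem IsHom.coassoc_at {M N : Comod k H} {f : M.X →ₗ[k] N.X} (hf : IsHom M N f)
    (hM : M.IsComodule) (x : M.X) :
    (N.ρ.rTensor H) (N.ρ (f x)) = (TensorProduct.assoc k N.X H H).symm
        ((Coalgebra.comul (R := k) (A := H)).lTensor N.X (N.ρ (f x))) ∧
    (TensorProduct.rid k N.X)
      ((Coalgebra.counit (R := k) (A := H)).lTensor N.X (N.ρ (f x))) = f x := by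
  have e1 : ∀ t : M.X ⊗[k] H, N.ρ.rTensor H (f.rTensor H t) =
      (f.rTensor H).rTensor H (M.ρ.rTensor H t) := fun t => by
    rw [← LinearMap.comp_apply, ← LinearMap.comp_apply, ← LinearMap.rTensor_comp,
      ← LinearMap.rTensor_comp, hf]
  have e2 : ∀ t : M.X ⊗[k] H, (TensorProduct.assoc k N.X H H).symm
        ((Coalgebra.comul (R := k) (A := H)).lTensor N.X (f.rTensor H t)) =
      (f.rTensor H).rTensor H ((TensorProduct.assoc k M.X H H).symm
        ((Coalgebra.comul (R := k) (A := H)).lTensor M.X t)) := fun t => by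
    induction t with
    | zero => simp
    | add a b ha hb => simp only [map_add, ha, hb]
    | tmul x h =>
      simp only [LinearMap.lTensor_tmul, LinearMap.rTensor_tmul]
      generalize Coalgebra.comul (R := k) h = c
      induction c with
      | zero => simp
      | tmul a b => simp
      | add a b ha hb => simp only [TensorProduct.tmul_add, map_add, ha, hb]
  have h1 := LinearMap.congr_fun hM.1 x
  simp only [LinearMap.comp_apply, LinearEquiv.coe_coe] at h1
  constructor
  · rw [hf.apply, e1, e2, h1]
  · have h2 := hM.act_counit x
    have h3 : ctrR (Coalgebra.counit (R := k) (A := H)) (N.ρ (f x)) = f x := by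
      rw [hf.apply, ctrR_rTensor, ← act_apply, h2]
    exact h3

theorem isComodule_of_injective {M N : Comod k H} {f : M.X →ₗ[k] N.X} (hf : IsHom M N f)
    (hinj : Function.Injective f) (hN : N.IsComodule) : M.IsComodule := by
  have hi1 : Function.Injective (f.rTensor H) := Module.Flat.rTensor_preserves_injective_linearMap f hinj
  have hi2 : Function.Injective ((f.rTensor H).rTensor H) :=
    Module.Flat.rTensor_preserves_injective_linearMap _ hi1
  have e1 : ∀ t : M.X ⊗[k] H, N.ρ.rTensor H (f.rTensor H t) =
      (f.rTensor H).rTensor H (M.ρ.rTensor H t) := fun t => by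
    rw [← LinearMap.comp_apply, ← LinearMap.comp_apply, ← LinearMap.rTensor_comp,
      ← LinearMap.rTensor_comp, hf]
  have e2 : ∀ t : M.X ⊗[k] H, (TensorProduct.assoc k N.X H H).symm
        ((Coalgebra.comul (R := k) (A := H)).lTensor N.X (f.rTensor H t)) =
      (f.rTensor H).rTensor H ((TensorProduct.assoc k M.X H H).symm
        ((Coalgebra.comul (R := k) (A := H)).lTensor M.X t)) := fun t => by
    induction t with
    | zero => simp
    | add a b ha hb => simp only [map_add, ha, hb]
    | tmul x h =>
      simp only [LinearMap.lTensor_tmul, LinearMap.rTensor_tmul]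
      generalize Coalgebra.comul (R := k) h = c
      induction c with
      | zero => simp
      | tmul a b => simp
      | add a b ha hb => simp only [TensorProduct.tmul_add, map_add, ha, hb]
  constructor
  · ext x
    apply hi2
    have h1 := LinearMap.congr_fun hN.1 (f x)
    simp only [LinearMap.comp_apply, LinearEquiv.coe_coe] at h1 ⊢
    rw [← e1, ← e2, ← hf.apply, h1]
  · ext x
    apply hinj
    have h2 := hN.act_counit (f x)
    rw [act_apply, hf.apply, ctrR_rTensor] at h2
    exact h2

end Comod


namespace Comod

variable {k : Type} [Field k] {H : Type} [Ring H] [HopfAlgebra k H]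

theorem rTensor_subtype_injective {X : Type} [AddCommGroup X] [Module k X] (N : Submodule k X) :
    Function.Injective (N.subtype.rTensor H) :=
  Module.Flat.rTensor_preserves_injective_linearMap _ N.injective_subtype

/-- Restriction of a comodule to a subcomodule. -/
@[reducible] noncomputable def restrict (M : Comod k H) (N : Submodule k M.X) (h : M.IsSubcomodule N) :
    Comod k H where
  X := N
  ρ := (LinearEquiv.ofInjective (N.subtype.rTensor H) (rTensor_subtype_injective N)).symm.toLinearMap
    ∘ₗ (M.ρ ∘ₗ N.subtype).codRestrict _ (fun x => h x x.2)

theorem restrict_isHom (M : Comod k H) (N : Submodule k M.X) (h : M.IsSubcomodule N) :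
    IsHom (M.restrict N h) M N.subtype := by
  refine LinearMap.ext fun x => ?_
  have h1 : (N.subtype.rTensor H) ((M.restrict N h).ρ x) =
      ((LinearEquiv.ofInjective (N.subtype.rTensor H) (rTensor_subtype_injective N))
        ((M.restrict N h).ρ x) : M.X ⊗[k] H) := rfl
  rw [LinearMap.comp_apply, LinearMap.comp_apply]
  refine Eq.trans ?_ h1.symm
  simp only [restrict, LinearMap.comp_apply, LinearEquiv.coe_coe, LinearEquiv.apply_symm_apply]
  rfl

theorem restrict_isComodule {M : Comod k H} (hM : M.IsComodule) (N : Submodule k M.X)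
    (h : M.IsSubcomodule N) : (M.restrict N h).IsComodule :=
  isComodule_of_injective (restrict_isHom M N h) N.injective_subtype hM

theorem inl_isHom (M N : Comod k H) : IsHom M (M.dsum N) (LinearMap.inl k M.X N.X) := by
  have h : ((LinearMap.inl k M.X N.X).rTensor H ∘ₗ M.ρ ∘ₗ LinearMap.fst k M.X N.X
     + (LinearMap.inr k M.X N.X).rTensor H ∘ₗ N.ρ ∘ₗ LinearMap.snd k M.X N.X) ∘ₗ
     LinearMap.inl k M.X N.X = (LinearMap.inl k M.X N.X).rTensor H ∘ₗ M.ρ := by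
    refine LinearMap.ext fun x => ?_
    simp
  exact h

theorem inr_isHom (M N : Comod k H) : IsHom N (M.dsum N) (LinearMap.inr k M.X N.X) := by
  have h : ((LinearMap.inl k M.X N.X).rTensor H ∘ₗ M.ρ ∘ₗ LinearMap.fst k M.X N.X
     + (LinearMap.inr k M.X N.X).rTensor H ∘ₗ N.ρ ∘ₗ LinearMap.snd k M.X N.X) ∘ₗ
     LinearMap.inr k M.X N.X = (LinearMap.inr k M.X N.X).rTensor H ∘ₗ N.ρ := by
    refine LinearMap.ext fun x => ?_
    simp
  exact h

theorem isComodule_of_jointly {M N P : Comod k H} {i : M.X →ₗ[k] P.X} {j : N.X →ₗ[k] P.X}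
    (hi : IsHom M P i) (hj : IsHom N P j) (hs : ∀ x, ∃ a b, x = i a + j b)
    (hM : M.IsComodule) (hN : N.IsComodule) : P.IsComodule := by
  constructor
  · refine LinearMap.ext fun x => ?_
    obtain ⟨a, b, rfl⟩ := hs x
    rw [map_add, map_add]
    exact congrArg₂ (· + ·) (hi.coassoc_at hM a).1 (hj.coassoc_at hN b).1
  · refine LinearMap.ext fun x => ?_
    obtain ⟨a, b, rfl⟩ := hs x
    rw [map_add, map_add]
    exact congrArg₂ (· + ·) (hi.coassoc_at hM a).2 (hj.coassoc_at hN b).2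

theorem isHom_of_jointly {M N P Q : Comod k H} {i : M.X →ₗ[k] P.X} {j : N.X →ₗ[k] P.X}
    (hi : IsHom M P i) (hj : IsHom N P j) (hs : ∀ x, ∃ a b, x = i a + j b)
    {e : P.X →ₗ[k] Q.X} (h1 : IsHom M Q (e ∘ₗ i)) (h2 : IsHom N Q (e ∘ₗ j)) : IsHom P Q e := by
  refine LinearMap.ext fun x => ?_
  obtain ⟨a, b, rfl⟩ := hs x
  rw [map_add, map_add]
  have k1 := h1.apply a
  have k2 := h2.apply b
  rw [LinearMap.rTensor_comp_apply, ← hi.apply] at k1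
  rw [LinearMap.rTensor_comp_apply, ← hj.apply] at k2
  exact congrArg₂ (· + ·) k1 k2

theorem prod_jointly (M N : Comod k H) (x : M.X × N.X) :
    ∃ a b, x = LinearMap.inl k M.X N.X a + LinearMap.inr k M.X N.X b :=
  ⟨x.1, x.2, by simp⟩

theorem dsum_isComodule {M N : Comod k H} (hM : M.IsComodule) (hN : N.IsComodule) :
    (M.dsum N).IsComodule :=
  isComodule_of_jointly (inl_isHom M N) (inr_isHom M N) (prod_jointly M N) hM hN

theorem dsum_fd (M N : Comod k H) (hM : FiniteDimensional k M.X) (hN : FiniteDimensional k N.X) :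
    FiniteDimensional k (M.dsum N).X := by
  change FiniteDimensional k (M.X × N.X); infer_instance

theorem tensor_fd (M N : Comod k H) (hM : FiniteDimensional k M.X) (hN : FiniteDimensional k N.X) :
    FiniteDimensional k (M.tensor N).X := by
  change FiniteDimensional k (M.X ⊗[k] N.X); infer_instance

/-- A comodule is the direct sum of two complementary subcomodules. -/
theorem dsum_restrict_iso {M : Comod k H} {N N' : Submodule k M.X} (h : M.IsSubcomodule N)
    (h' : M.IsSubcomodule N') (hc : IsCompl N N') :
    Iso ((M.restrict N h).dsum (M.restrict N' h')) M := by
  have e1 : (Submodule.prodEquivOfIsCompl N N' hc).toLinearMap ∘ₗ LinearMap.inl k N N'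
      = N.subtype := by ext; simp
  have e2 : (Submodule.prodEquivOfIsCompl N N' hc).toLinearMap ∘ₗ LinearMap.inr k N N'
      = N'.subtype := by ext; simp
  refine ⟨Submodule.prodEquivOfIsCompl N N' hc, isHom_of_jointly (inl_isHom _ _) (inr_isHom _ _)
    (prod_jointly _ _) ?_ ?_⟩
  · exact Eq.mpr (congrArg _ e1) (restrict_isHom M N h)
  · exact Eq.mpr (congrArg _ e2) (restrict_isHom M N' h')

theorem C_eq_sup {M : Comod k H} {N N' : Submodule k M.X} (h : M.IsSubcomodule N)
    (h' : M.IsSubcomodule N') (hc : IsCompl N N') :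
    M.C = (M.restrict N h).C ⊔ (M.restrict N' h').C := by
  apply le_antisymm
  · apply C_le
    intro φ x
    have hx : x ∈ N ⊔ N' := by rw [hc.sup_eq_top]; trivial
    obtain ⟨a, ha, b, hb, rfl⟩ := Submodule.mem_sup.1 hx
    rw [map_add]
    have h1 := (restrict_isHom M N h).coef φ ⟨a, ha⟩
    have h2 := (restrict_isHom M N' h').coef φ ⟨b, hb⟩
    refine add_mem (Submodule.mem_sup_left ?_) (Submodule.mem_sup_right ?_)
    · exact (show M.coef φ a = _ from h1) ▸ coef_mem _ _ _
    · exact (show M.coef φ b = _ from h2) ▸ coef_mem _ _ _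
  · exact sup_le (C_le_of_injective (restrict_isHom M N h) N.injective_subtype)
      (C_le_of_injective (restrict_isHom M N' h') N'.injective_subtype)

theorem unit_isComodule : (unit k H).IsComodule := by
  have h1 : ((TensorProduct.mk k k H).flip 1).rTensor H ∘ₗ (TensorProduct.mk k k H).flip 1 =
      (TensorProduct.assoc k k H H).symm.toLinearMap
        ∘ₗ (Coalgebra.comul (R := k) (A := H)).lTensor k ∘ₗ (TensorProduct.mk k k H).flip 1 := by
    refine LinearMap.ext fun (x : k) => ?_
    simp [Algebra.TensorProduct.one_def]
  have h2 : (TensorProduct.rid k k).toLinearMap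
      ∘ₗ (Coalgebra.counit (R := k) (A := H)).lTensor k ∘ₗ (TensorProduct.mk k k H).flip 1
      = LinearMap.id := by
    refine LinearMap.ext fun (x : k) => ?_
    simp
  exact ⟨h1, h2⟩

theorem regular_isComodule : (regular k H).IsComodule := by
  have h1 : (Coalgebra.comul (R := k) (A := H)).rTensor H ∘ₗ Coalgebra.comul =
      (TensorProduct.assoc k H H H).symm.toLinearMap
        ∘ₗ (Coalgebra.comul (R := k) (A := H)).lTensor H ∘ₗ Coalgebra.comul := by
    refine LinearMap.ext fun (x : H) => ?_
    have := Coalgebra.coassoc_apply (R := k) x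
    simp only [LinearMap.comp_apply, LinearEquiv.coe_coe]
    rw [← this, LinearEquiv.symm_apply_apply]
  have h2 : (TensorProduct.rid k H).toLinearMap
      ∘ₗ (Coalgebra.counit (R := k) (A := H)).lTensor H ∘ₗ Coalgebra.comul
      = LinearMap.id := by
    refine LinearMap.ext fun (x : H) => ?_
    simp
  exact ⟨h1, h2⟩

theorem C_unit : (unit k H).C = 1 := by
  apply le_antisymm
  · apply C_le
    intro φ x
    rw [coef_apply]
    have : ctrL φ ((unit k H).ρ x) = φ x • (1 : H) := ctrL_tmul φ x 1
    rw [this]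
    exact Submodule.smul_mem _ _ (Submodule.one_le.1 le_rfl)
  · rw [Submodule.one_le]
    have : (unit k H).coef (LinearMap.id : k →ₗ[k] k) (1 : k) = (1 : H) := by
      exact (ctrL_tmul (X := k) LinearMap.id (1 : k) (1 : H)).trans (by simp)
    rw [← this]
    exact coef_mem _ _ _

theorem tensor_rho (M N : Comod k H) (m : M.X) (n : N.X) :
    (M.tensor N).ρ (m ⊗ₜ[k] n) = tmerge (M.ρ m ⊗ₜ[k] N.ρ n) := rfl

theorem C_tensor (M N : Comod k H) (hM : FiniteDimensional k M.X) (hN : FiniteDimensional k N.X) :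
    (M.tensor N).C = M.C * N.C := by
  have key : ∀ (φ : Module.Dual k M.X) (χ : Module.Dual k N.X) (m : M.X) (n : N.X),
      (M.tensor N).coef (TensorProduct.dualDistrib k M.X N.X (φ ⊗ₜ χ)) (m ⊗ₜ[k] n) =
        M.coef φ m * N.coef χ n := fun φ χ m n => ctrL_tmerge φ χ _ _
  apply le_antisymm
  · apply C_le
    intro Φ z
    change Module.Dual k (M.X ⊗[k] N.X) at Φ
    change M.X ⊗[k] N.X at z
    obtain ⟨u, rfl⟩ := (TensorProduct.dualDistribEquiv k M.X N.X).surjective Φ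
    have hu : (TensorProduct.dualDistribEquiv k M.X N.X) u =
      TensorProduct.dualDistrib k M.X N.X u := rfl
    rw [hu]
    induction u with
    | zero => rw [map_zero]; erw [map_zero]; exact zero_mem _
    | add a b ha hb =>
      rw [map_add]; erw [map_add, LinearMap.add_apply]
      exact add_mem (ha rfl) (hb rfl)
    | tmul φ χ =>
      induction z with
      | zero => erw [map_zero]; exact zero_mem _
      | add a b ha hb => erw [map_add]; exact add_mem ha hb
      | tmul m n =>
        erw [key]
        exact Submodule.mul_mem_mul (coef_mem _ _ _) (coef_mem _ _ _)
  · rw [Submodule.mul_le]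
    rintro _ ⟨a, rfl⟩ _ ⟨b, rfl⟩
    induction a with
    | zero => simp
    | add a a' ha hb => rw [map_add, add_mul]; exact add_mem ha hb
    | tmul φ m =>
      induction b with
      | zero => simp
      | add a a' ha hb => rw [map_add, mul_add]; exact add_mem ha hb
      | tmul χ n =>
        rw [TensorProduct.lift.tmul, TensorProduct.lift.tmul, ← key]
        exact coef_mem _ _ _

theorem tensor_isComodule_s3 {M N : Comod k H} (hM : M.IsComodule) (hN : N.IsComodule) :
    (M.tensor N).IsComodule := by
  constructor
  · refine TensorProduct.ext' fun m n => ?_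
    have h1 := LinearMap.congr_fun hM.1 m
    have h2 := LinearMap.congr_fun hN.1 n
    simp only [LinearMap.comp_apply, LinearEquiv.coe_coe] at h1 h2
    -- two-step merge
    have e1 : ∀ (t : M.X ⊗[k] H) (u : N.X ⊗[k] H),
        ((tmerge (k := k) (H := H) (X := M.X) (Y := N.X)) ∘ₗ TensorProduct.map M.ρ N.ρ).rTensor H (tmerge (t ⊗ₜ[k] u)) =
          (tmerge.rTensor H) (tmerge ((M.ρ.rTensor H t) ⊗ₜ[k] (N.ρ.rTensor H u))) := by
      intro t u
      induction t with
      | zero => simp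
      | add a b ha hb => simp only [TensorProduct.add_tmul, map_add, ha, hb]
      | tmul x h =>
        induction u with
        | zero => simp
        | add a b ha hb => simp only [TensorProduct.tmul_add, map_add, ha, hb]
        | tmul y g =>
          simp only [tmerge_tmul, LinearMap.rTensor_tmul]
          rfl
    have e2 : ∀ (t : M.X ⊗[k] H) (u : N.X ⊗[k] H),
        (TensorProduct.assoc k (M.X ⊗[k] N.X) H H).symm
          ((Coalgebra.comul (R := k) (A := H)).lTensor (M.X ⊗[k] N.X) (tmerge (t ⊗ₜ[k] u))) =
          (tmerge.rTensor H) (tmerge (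
            ((TensorProduct.assoc k M.X H H).symm
              ((Coalgebra.comul (R := k) (A := H)).lTensor M.X t)) ⊗ₜ[k]
            ((TensorProduct.assoc k N.X H H).symm
              ((Coalgebra.comul (R := k) (A := H)).lTensor N.X u)))) := by
      intro t u
      induction t with
      | zero => simp
      | add a b ha hb => simp only [TensorProduct.add_tmul, map_add, ha, hb]
      | tmul x h =>
        induction u with
        | zero => simp
        | add a b ha hb => simp only [TensorProduct.tmul_add, map_add, ha, hb]
        | tmul y g =>
          simp only [tmerge_tmul, LinearMap.lTensor_tmul, Bialgebra.comul_mul]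
          generalize Coalgebra.comul (R := k) h = c
          generalize Coalgebra.comul (R := k) g = c'
          induction c with
          | zero => simp
          | add a b ha hb =>
            simp only [add_mul, TensorProduct.tmul_add, TensorProduct.add_tmul, map_add, ha, hb]
          | tmul a b =>
            induction c' with
            | zero => simp
            | add a b ha hb =>
              simp only [mul_add, TensorProduct.tmul_add, TensorProduct.add_tmul, map_add, ha, hb]
            | tmul a' b' => simp
    exact (e1 _ _).trans ((by rw [h1, h2] : _ = _).trans (e2 _ _).symm)
  · refine TensorProduct.ext' fun m n => ?_
    have h1 := hM.act_counit m
    have h2 := hN.act_counit n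
    rw [act_apply] at h1 h2
    have e : ∀ (t : M.X ⊗[k] H) (u : N.X ⊗[k] H),
        ctrR (Coalgebra.counit (R := k) (A := H)) (tmerge (t ⊗ₜ[k] u)) =
        ctrR (Coalgebra.counit (R := k) (A := H)) t ⊗ₜ[k]
          ctrR (Coalgebra.counit (R := k) (A := H)) u := by
      intro t u
      induction t with
      | zero => simp
      | add a b ha hb => simp only [TensorProduct.add_tmul, map_add, ha, hb]
      | tmul x h =>
        induction u with
        | zero => simp
        | add a b ha hb => simp only [TensorProduct.tmul_add, map_add, ha, hb]
        | tmul y g =>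
          simp [TensorProduct.smul_tmul', TensorProduct.tmul_smul, smul_smul, mul_comm]
    have := e (M.ρ m) (N.ρ n)
    rw [h1, h2] at this
    exact this

end Comod


namespace Comod

variable {k : Type} [Field k] {H : Type} [Ring H] [HopfAlgebra k H]

theorem exists_fd_subcomodule {M : Comod k H} (hM : M.IsComodule) (W : Submodule k M.X)
    (hW : FiniteDimensional k W) :
    ∃ N : Submodule k M.X, FiniteDimensional k N ∧ M.IsSubcomodule N ∧ W ≤ N := by
  classical
  refine ⟨Submodule.map₂ M.act ⊤ W, ?_, ?_, ?_⟩
  · obtain ⟨t, ht⟩ := (Submodule.fg_iff_finiteDimensional W).2 hW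
    choose F hF1 hF2 using fun v : M.X => ctrR_range_fd (H := H) (M.ρ v)
    have hle : Submodule.map₂ M.act ⊤ W ≤ ⨆ v : t, F v := by
      rw [Submodule.map₂_le]
      intro ψ _ w hw
      rw [← ht] at hw
      induction hw using Submodule.span_induction with
      | mem x hx => exact Submodule.mem_iSup_of_mem (⟨x, hx⟩ : t) (hF2 x ψ)
      | zero => rw [map_zero]; exact zero_mem _
      | add a b _ _ ha hb => rw [map_add]; exact add_mem ha hb
      | smul c a _ ha => rw [map_smul]; exact Submodule.smul_mem _ _ ha
    have : FiniteDimensional k (⨆ v : t, F v : Submodule k M.X) :=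
      Submodule.finiteDimensional_iSup _
    exact Submodule.finiteDimensional_of_le hle
  · apply isSubcomodule_of_act
    intro ψ x hx
    have : Submodule.map₂ M.act ⊤ W ≤ (Submodule.map₂ M.act ⊤ W).comap (M.act ψ) := by
      rw [Submodule.map₂_le]
      intro ψ' _ w hw
      rw [Submodule.mem_comap, hM.act_act]
      exact Submodule.apply_mem_map₂ _ trivial hw
    exact this hx
  · intro w hw
    rw [← hM.act_counit w]
    exact Submodule.apply_mem_map₂ _ trivial hw

theorem regular_coef_counit (x : H) :
    (regular k H).coef (Coalgebra.counit (R := k) (A := H)) x = x := by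
  have : (TensorProduct.lid k H) ((Coalgebra.counit (R := k) (A := H)).rTensor H
    (Coalgebra.comul x)) = x := by simp
  exact this

theorem exists_comod_C_ge (V : Submodule k H) (hV : FiniteDimensional k V) :
    ∃ M : Comod k H, M.IsComodule ∧ FiniteDimensional k M.X ∧ V ≤ M.C := by
  obtain ⟨N, h1, h2, h3⟩ := exists_fd_subcomodule (regular_isComodule (k := k) (H := H)) V hV
  refine ⟨(regular k H).restrict N h2, restrict_isComodule regular_isComodule N h2, h1, ?_⟩
  intro v hv
  have h4 := (restrict_isHom (regular k H) N h2).coef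
    (Coalgebra.counit (R := k) (A := H)) (⟨v, h3 hv⟩ : N)
  have h5 := (regular_coef_counit v).symm.trans h4
  rw [h5]
  exact coef_mem _ _ _

/-! Simple comodules as modules over a free algebra. -/

/-- The free algebra on the functionals. -/
abbrev FA (k : Type) [Field k] (H : Type) [Ring H] [HopfAlgebra k H] : Type :=
  FreeAlgebra k (Module.Dual k H)

/-- The action homomorphism. -/
noncomputable def actHom (M : Comod k H) : FA k H →ₐ[k] Module.End k M.X :=
  FreeAlgebra.lift k (fun ψ => M.act ψ)

theorem actHom_eq (r : FA k H) : ∃ ψ : Module.Dual k H, ∀ M : Comod k H, M.IsComodule →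
    M.actHom r = M.act ψ := by
  induction r using FreeAlgebra.induction with
  | grade0 c =>
    refine ⟨c • Coalgebra.counit, fun M hM => LinearMap.ext fun x => ?_⟩
    rw [AlgHom.commutes, map_smul, LinearMap.smul_apply, hM.act_counit]; rfl
  | grade1 ψ => exact ⟨ψ, fun M hM => by simp [actHom]⟩
  | mul a b ha hb =>
    obtain ⟨p, hp⟩ := ha
    obtain ⟨q, hq⟩ := hb
    refine ⟨dconv p q, fun M hM => LinearMap.ext fun x => ?_⟩
    rw [map_mul, hp M hM, hq M hM, Module.End.mul_apply, hM.act_act]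
  | add a b ha hb =>
    obtain ⟨p, hp⟩ := ha
    obtain ⟨q, hq⟩ := hb
    exact ⟨p + q, fun M hM => by rw [map_add, map_add, hp M hM, hq M hM]⟩

/-- Comodules as modules. -/
@[reducible] noncomputable def faModule (M : Comod k H) : Module (FA k H) M.X :=
  Module.compHom M.X M.actHom.toRingHom

noncomputable instance instFA (M : Comod k H) : Module (FA k H) M.X := M.faModule

theorem fa_smul (M : Comod k H) (r : FA k H) (x : M.X) : r • x = M.actHom r x := rfl

theorem fa_smul_ι (M : Comod k H) (ψ : Module.Dual k H) (x : M.X) :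
    (FreeAlgebra.ι k ψ : FA k H) • x = M.act ψ x := by
  rw [fa_smul, actHom, FreeAlgebra.lift_ι_apply]

instance instFATower (M : Comod k H) : IsScalarTower k (FA k H) M.X :=
  ⟨fun c r x => by rw [fa_smul, fa_smul, map_smul, LinearMap.smul_apply]⟩

theorem fa_isHom {M N : Comod k H} (f : M.X →ₗ[FA k H] N.X) :
    IsHom M N (f.restrictScalars k) := by
  apply isHom_of_act
  intro ψ x
  rw [← fa_smul_ι, ← fa_smul_ι]
  exact f.map_smul _ _

theorem IsSimple.fa {M : Comod k H} (hM : M.IsSimple) : IsSimpleModule (FA k H) M.X := by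
  have := hM.2.1
  rw [isSimpleModule_iff]
  refine { exists_pair_ne := ⟨⊥, ⊤, bot_ne_top⟩, eq_bot_or_eq_top := fun N => ?_ }
  have h := hM.2.2.2 (N.restrictScalars k) (isSubcomodule_of_act M _ (fun ψ x hx => by
    rw [← fa_smul_ι]; exact N.smul_mem _ hx))
  rcases h with h | h
  · left; exact (Submodule.restrictScalars_eq_bot_iff k _ _).1 h
  · right; exact (Submodule.restrictScalars_eq_top_iff k _ _).1 h

end Comod


namespace Comod

variable {k : Type} [Field k] {H : Type} [Ring H] [HopfAlgebra k H]

theorem schur_ne {M N : Comod k H} (hM : M.IsSimple) (hN : N.IsSimple) (h : ¬ Iso M N)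
    (f : M.X →ₗ[FA k H] N.X) : f = 0 := by
  have := hM.fa
  have := hN.fa
  rcases f.bijective_or_eq_zero with hb | h0
  · exact absurd ⟨LinearEquiv.ofBijective (f.restrictScalars k) hb, fa_isHom f⟩ h
  · exact h0

theorem schur_eq [IsAlgClosed k] {M : Comod k H} (hM : M.IsSimple)
    (f : M.X →ₗ[FA k H] M.X) : ∃ c : k, ∀ x, f x = c • x := by
  have := hM.fa
  have := hM.2.2.1
  obtain ⟨c, hc⟩ := (IsSimpleModule.algebraMap_end_bijective_of_isAlgClosed
    (A := FA k H) (V := M.X) k).2 f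
  exact ⟨c, fun x => by rw [← hc]; rfl⟩

theorem act_pi_surjective [IsAlgClosed k] {ι : Type} [Fintype ι] [DecidableEq ι]
    (S : ι → Comod k H) (hS : ∀ i, (S i).IsSimple) (hne : ∀ i j, i ≠ j → ¬ Iso (S i) (S j)) :
    Function.Surjective (LinearMap.pi (fun i => (S i).act)) := by
  intro T
  have hs := fun i => (hS i).fa
  have hfd := fun i => (hS i).2.2.1
  have hscal : ∀ g : Module.End (FA k H) (∀ i, (S i).X), ∃ c : ι → k, ∀ x j,
      g x j = c j • x j := by
    intro g
    let G : ∀ i j, (S i).X →ₗ[FA k H] (S j).X := fun i j =>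
      LinearMap.proj j ∘ₗ g ∘ₗ LinearMap.single (FA k H) (fun i => (S i).X) i
    choose c hc using fun j => schur_eq (hS j) (G j j)
    refine ⟨c, fun x j => ?_⟩
    have hx : x = ∑ i, LinearMap.single (FA k H) (fun i => (S i).X) i (x i) :=
      (Finset.univ_sum_single x).symm
    have h1 : g x j = ∑ i, G i j (x i) := by
      conv_lhs => rw [hx]
      rw [map_sum, Finset.sum_apply]
      rfl
    rw [h1, Finset.sum_eq_single j]
    · exact hc j _
    · intro i _ hij
      rw [schur_ne (hS i) (hS j) (hne i j hij) (G i j)]; rfl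
    · simp
  let F : Module.End (Module.End (FA k H) (∀ i, (S i).X)) (∀ i, (S i).X) :=
    { toFun := fun x i => T i (x i)
      map_add' := fun x y => by ext i; simp
      map_smul' := fun g x => by
        obtain ⟨c, hc⟩ := hscal g
        ext i
        simp only [Module.End.smul_def, RingHom.id_apply]
        rw [hc, hc, map_smul] }
  obtain ⟨t, ht⟩ := (Module.Finite.fg_top : (⊤ : Submodule k (∀ i, (S i).X)).FG)
  obtain ⟨r, hr⟩ := jacobson_density F t
  obtain ⟨ψ, hψ⟩ := actHom_eq r
  refine ⟨ψ, ?_⟩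
  have hlin : (LinearMap.pi fun i => T i ∘ₗ LinearMap.proj i : (∀ i, (S i).X) →ₗ[k] ∀ i, (S i).X) =
      LinearMap.pi fun i => (S i).act ψ ∘ₗ LinearMap.proj i := by
    apply LinearMap.ext_on ht
    intro m hm
    have := hr m hm
    ext i
    have h2 := congrFun this i
    change T i (m i) = r • (m i) at h2
    rw [fa_smul, hψ _ (hS i).1] at h2
    exact h2
  ext i x
  have := congrFun (LinearMap.congr_fun hlin (Pi.single i x)) i
  simpa using this.symm

theorem finrank_iSup_C [IsAlgClosed k] {ι : Type} [Fintype ι]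
    (S : ι → Comod k H) (hS : ∀ i, (S i).IsSimple) (hne : ∀ i j, i ≠ j → ¬ Iso (S i) (S j)) :
    Module.finrank k (⨆ i, (S i).C : Submodule k H) = ∑ i, (Module.finrank k (S i).X) ^ 2 := by
  classical
  have hfd := fun i => (hS i).2.2.1
  have hC : FiniteDimensional k (⨆ i, (S i).C : Submodule k H) :=
    Submodule.finiteDimensional_iSup _
  have hsurj := act_pi_surjective S hS hne
  have hker : LinearMap.ker (LinearMap.pi (fun i => (S i).act)) =
      LinearMap.ker ((⨆ i, (S i).C : Submodule k H).subtype.dualMap) := by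
    ext ψ
    rw [LinearMap.mem_ker, LinearMap.mem_ker]
    constructor
    · intro h
      have hle : (⨆ i, (S i).C : Submodule k H) ≤ LinearMap.ker ψ := by
        apply iSup_le
        intro i
        apply C_le
        intro φ x
        rw [LinearMap.mem_ker, ← apply_act]
        have := congrFun h i
        rw [LinearMap.pi_apply] at this
        rw [this]; simp
      ext x
      exact hle x.2
    · intro h
      ext i x
      rw [LinearMap.pi_apply]
      apply (Module.forall_dual_apply_eq_zero_iff k _).1
      intro φ
      rw [apply_act]
      have h2 : (S i).coef φ x ∈ (⨆ i, (S i).C : Submodule k H) :=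
        Submodule.mem_iSup_of_mem i (coef_mem _ _ _)
      exact LinearMap.congr_fun h ⟨_, h2⟩
  have hsurj2 : Function.Surjective ((⨆ i, (S i).C : Submodule k H).subtype.dualMap) :=
    LinearMap.dualMap_surjective_of_injective (Submodule.injective_subtype _)
  have e := (LinearMap.quotKerEquivOfSurjective _ hsurj).symm ≪≫ₗ
    Submodule.quotEquivOfEq _ _ hker ≪≫ₗ LinearMap.quotKerEquivOfSurjective _ hsurj2
  have h1 := e.finrank_eq
  rw [Subspace.dual_finrank_eq] at h1
  rw [← h1, Module.finrank_pi_fintype]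
  refine Finset.sum_congr rfl fun i _ => ?_
  rw [Module.finrank_linearMap, sq]

end Comod


namespace Comod

variable {k : Type} [Field k] {H : Type} [Ring H] [HopfAlgebra k H]

theorem C_of_jointly {M N P : Comod k H} {i : M.X →ₗ[k] P.X} {j : N.X →ₗ[k] P.X}
    (hi : IsHom M P i) (hj : IsHom N P j) (hs : ∀ x, ∃ a b, x = i a + j b)
    (hi' : Function.Injective i) (hj' : Function.Injective j) : P.C = M.C ⊔ N.C := by
  apply le_antisymm
  · apply C_le
    intro φ x
    obtain ⟨a, b, rfl⟩ := hs x
    rw [map_add, hi.coef, hj.coef]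
    exact add_mem (Submodule.mem_sup_left (coef_mem _ _ _))
      (Submodule.mem_sup_right (coef_mem _ _ _))
  · exact sup_le (C_le_of_injective hi hi') (C_le_of_injective hj hj')

theorem C_dsum (M N : Comod k H) : (M.dsum N).C = M.C ⊔ N.C :=
  C_of_jointly (inl_isHom M N) (inr_isHom M N) (prod_jointly M N)
    LinearMap.inl_injective LinearMap.inr_injective

theorem finrank_dsum (M N : Comod k H) (hM : FiniteDimensional k M.X)
    (hN : FiniteDimensional k N.X) :
    Module.finrank k (M.dsum N).X = Module.finrank k M.X + Module.finrank k N.X := by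
  change Module.finrank k (M.X × N.X) = _
  exact Module.finrank_prod

theorem Iso.finrank_eq {M N : Comod k H} (h : Iso M N) :
    Module.finrank k M.X = Module.finrank k N.X := by
  obtain ⟨e, _⟩ := h
  exact e.finrank_eq

theorem iso_of_subsingleton {M N : Comod k H} (hM : Subsingleton M.X) (hN : Subsingleton N.X) :
    Iso M N :=
  ⟨0, LinearMap.ext fun x => by rw [Subsingleton.elim x 0, map_zero, map_zero]⟩

theorem range_isSubcomodule {M N : Comod k H} {i : M.X →ₗ[k] N.X} (hi : IsHom M N i) :
    N.IsSubcomodule (LinearMap.range i) := by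
  apply isSubcomodule_of_act
  rintro ψ _ ⟨y, rfl⟩
  refine ⟨M.act ψ y, ?_⟩
  rw [act_apply, act_apply, hi.apply, ctrR_rTensor]

theorem C_of_subsingleton {M : Comod k H} (hM : Subsingleton M.X) : M.C = ⊥ := by
  rw [eq_bot_iff]
  apply C_le
  intro φ x
  rw [Subsingleton.elim x 0, map_zero]; exact zero_mem _

end Comod

namespace GrSemiring

open Comod

variable {k : Type} [Field k] {H : Type} [Ring H] [HopfAlgebra k H] (G : GrSemiring k H)

theorem subsingleton_of_cls {M : Comod k H} (hM : M.IsComodule) (hf : FiniteDimensional k M.X)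
    (h : G.cls M = 0) : Subsingleton M.X := by
  have h1 := G.cls_dsum M M hM hM hf hf
  have h2 := G.cls_inj (M.dsum M) M (dsum_isComodule hM hM) hM (dsum_fd M M hf hf) hf
    (by rw [h1, h, add_zero])
  have h3 := h2.finrank_eq
  rw [finrank_dsum M M hf hf] at h3
  exact (Module.finrank_zero_iff (R := k)).1 (by omega)

theorem cls_of_subsingleton {M : Comod k H} (hM : M.IsComodule) (hf : FiniteDimensional k M.X)
    (h : Subsingleton M.X) : G.cls M = 0 := by
  obtain ⟨Z, hZ, hZf, hZ0⟩ := G.cls_surj 0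
  rw [← hZ0]
  exact G.cls_iso M Z hM hZ hf hZf (iso_of_subsingleton h (G.subsingleton_of_cls hZ hZf hZ0))

theorem C_eq_of_cls {M N : Comod k H} (hM : M.IsComodule) (hf : FiniteDimensional k M.X)
    (hN : N.IsComodule) (hfN : FiniteDimensional k N.X) (h : G.cls M = G.cls N) : M.C = N.C :=
  (G.cls_inj M N hM hN hf hfN h).C_eq

theorem C_of_sum {ι : Type} (s : Finset ι) (S : ι → Comod k H) (hS : ∀ i, (S i).IsComodule)
    (hSf : ∀ i, FiniteDimensional k (S i).X) :
    ∀ (M : Comod k H), M.IsComodule → FiniteDimensional k M.X →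
      G.cls M = ∑ i ∈ s, G.cls (S i) → M.C = ⨆ i ∈ s, (S i).C := by
  classical
  induction s using Finset.induction_on with
  | empty =>
    intro M hM hf h
    rw [C_of_subsingleton (G.subsingleton_of_cls hM hf (by simpa using h))]
    simp
  | insert a s ha ih =>
    intro M hM hf h
    obtain ⟨N, hN, hNf, hN0⟩ := G.cls_surj (∑ i ∈ s, G.cls (S i))
    rw [Finset.iSup_insert, ← ih N hN hNf hN0, ← C_dsum]
    apply G.C_eq_of_cls hM hf (dsum_isComodule (hS a) hN) (dsum_fd _ _ (hSf a) hNf)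
    rw [G.cls_dsum _ _ (hS a) hN (hSf a) hNf, h, hN0, Finset.sum_insert ha]

theorem cls_split {M : Comod k H} (hM : M.IsComodule) (hf : FiniteDimensional k M.X)
    {N N' : Submodule k M.X} (h : M.IsSubcomodule N)
    (h' : M.IsSubcomodule N') (hc : IsCompl N N') :
    G.cls M = G.cls (M.restrict N h) + G.cls (M.restrict N' h') := by
  have f1 : FiniteDimensional k (M.restrict N h).X :=
    (inferInstance : FiniteDimensional k N)
  have f2 : FiniteDimensional k (M.restrict N' h').X :=
    (inferInstance : FiniteDimensional k N')
  have c1 := restrict_isComodule hM N h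
  have c2 := restrict_isComodule hM N' h'
  rw [← G.cls_dsum _ _ c1 c2 f1 f2]
  exact G.cls_iso _ _ hM (dsum_isComodule c1 c2) hf (dsum_fd _ _ f1 f2)
    (dsum_restrict_iso h h' hc).symm

theorem exists_decomp (hH : IsCosemisimple k H) (n : ℕ) :
    ∀ (M : Comod k H), M.IsComodule → FiniteDimensional k M.X → Module.finrank k M.X = n →
      ∃ (ι : Type) (_ : Fintype ι) (S : ι → Comod k H), (∀ i, (S i).IsSimple) ∧
        G.cls M = ∑ i, G.cls (S i) := by
  induction n using Nat.strong_induction_on with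
  | _ n ih =>
    intro M hM hf hn
    by_cases hsub : Subsingleton M.X
    · exact ⟨Empty, inferInstance, fun e => e.elim, fun e => e.elim, by
        rw [G.cls_of_subsingleton hM hf hsub]; simp⟩
    by_cases hs : M.IsSimple
    · exact ⟨Unit, inferInstance, fun _ => M, fun _ => hs, by simp⟩
    rw [not_subsingleton_iff_nontrivial] at hsub
    have : ∃ N : Submodule k M.X, M.IsSubcomodule N ∧ N ≠ ⊥ ∧ N ≠ ⊤ := by
      by_contra hcon
      push Not at hcon
      exact hs ⟨hM, hsub, hf, fun N hN => or_iff_not_imp_left.2 (hcon N hN)⟩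
    obtain ⟨N, hN, hb, ht⟩ := this
    obtain ⟨N', hN', hc⟩ := hH M hM N hN
    have ht' : N' ≠ ⊤ := by
      rintro rfl
      exact hb (by simpa using hc.disjoint.eq_bot)
    have l1 : Module.finrank k N < Module.finrank k M.X := Submodule.finrank_lt ht
    have l2 : Module.finrank k N' < Module.finrank k M.X := Submodule.finrank_lt ht'
    obtain ⟨ι, _, S, hS, h1⟩ := ih _ (hn ▸ l1) (M.restrict N hN) (restrict_isComodule hM N hN)
      (inferInstance : FiniteDimensional k N) rfl
    obtain ⟨κ, _, T, hT, h2⟩ := ih _ (hn ▸ l2) (M.restrict N' hN') (restrict_isComodule hM N' hN')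
      (inferInstance : FiniteDimensional k N') rfl
    refine ⟨ι ⊕ κ, inferInstance, Sum.elim S T, ?_, ?_⟩
    · rintro (i | j)
      · exact hS i
      · exact hT j
    · rw [G.cls_split hM hf hN hN' hc, h1, h2, Fintype.sum_sum_type]
      rfl

theorem simple_indecomp {M : Comod k H} (hM : M.IsSimple) :
    G.cls M ≠ 0 ∧ ∀ a b, G.cls M = a + b → a = 0 ∨ b = 0 := by
  have hnt := hM.2.1
  have hf := hM.2.2.1
  refine ⟨fun h => ?_, fun a b hab => ?_⟩
  · exact not_subsingleton M.X (G.subsingleton_of_cls hM.1 hf h)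
  · obtain ⟨P, hP, hPf, rfl⟩ := G.cls_surj a
    obtain ⟨Q, hQ, hQf, rfl⟩ := G.cls_surj b
    rw [← G.cls_dsum P Q hP hQ hPf hQf] at hab
    obtain ⟨e, he⟩ := (G.cls_inj _ _ hM.1 (dsum_isComodule hP hQ) hf
      (dsum_fd P Q hPf hQf) hab).symm
    let i : P.X →ₗ[k] M.X := e.toLinearMap ∘ₗ LinearMap.inl k P.X Q.X
    have hi : IsHom P M i := by
      refine LinearMap.ext fun x => ?_
      have h1 := he.apply (LinearMap.inl k P.X Q.X x)
      refine h1.trans ?_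
      refine (congrArg _ ((inl_isHom P Q).apply x)).trans ?_
      exact (LinearMap.rTensor_comp_apply H e.toLinearMap (LinearMap.inl k P.X Q.X) _).symm
    rcases hM.2.2.2 _ (range_isSubcomodule hi) with h | h
    · left
      apply G.cls_of_subsingleton hP hPf
      refine ⟨fun x y => ?_⟩
      have h0 : ∀ z : P.X, z = 0 := fun z => by
        have : i z = 0 := LinearMap.congr_fun (LinearMap.range_eq_bot.1 h) z
        have h2 : LinearMap.inl k P.X Q.X z = 0 := e.injective (this.trans (map_zero e).symm)
        exact LinearMap.inl_injective (h2.trans (map_zero _).symm)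
      rw [h0 x, h0 y]
    · right
      apply G.cls_of_subsingleton hQ hQf
      refine ⟨fun x y => ?_⟩
      have h0 : ∀ z : Q.X, z = 0 := fun z => by
        obtain ⟨p, hp⟩ := LinearMap.range_eq_top.1 h (e (LinearMap.inr k P.X Q.X z))
        have h2 : LinearMap.inl k P.X Q.X p = LinearMap.inr k P.X Q.X z := e.injective hp
        exact (congrArg Prod.snd h2).symm
      rw [h0 x, h0 y]

theorem simple_of_indecomp (hH : IsCosemisimple k H) {M : Comod k H} (hM : M.IsComodule)
    (hf : FiniteDimensional k M.X) (h0 : G.cls M ≠ 0)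
    (h : ∀ a b, G.cls M = a + b → a = 0 ∨ b = 0) : M.IsSimple := by
  refine ⟨hM, ?_, hf, fun N hN => ?_⟩
  · rw [← not_subsingleton_iff_nontrivial]
    exact fun hs => h0 (G.cls_of_subsingleton hM hf hs)
  · obtain ⟨N', hN', hc⟩ := hH M hM N hN
    rcases h _ _ (G.cls_split hM hf hN hN' hc) with h1 | h1
    · left
      have h2 := G.subsingleton_of_cls (restrict_isComodule hM N hN)
        (inferInstance : FiniteDimensional k N) h1
      exact Submodule.subsingleton_iff_eq_bot.1 h2
    · right
      have h2 := G.subsingleton_of_cls (restrict_isComodule hM N' hN')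
        (inferInstance : FiniteDimensional k N') h1
      have h3 : N' = ⊥ := Submodule.subsingleton_iff_eq_bot.1 h2
      subst h3
      simpa using hc.codisjoint.eq_top

theorem exists_pow {M : Comod k H} (hM : M.IsComodule) (hf : FiniteDimensional k M.X) (n : ℕ) :
    ∃ N : Comod k H, N.IsComodule ∧ FiniteDimensional k N.X ∧ G.cls N = G.cls M ^ n ∧
      N.C = M.C ^ n := by
  induction n with
  | zero =>
    exact ⟨unit k H, unit_isComodule, (inferInstance : FiniteDimensional k k),
      by rw [G.cls_one, pow_zero], by rw [C_unit, pow_zero]⟩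
  | succ n ih =>
    obtain ⟨N, h1, h2, h3, h4⟩ := ih
    exact ⟨N.tensor M, tensor_isComodule_s3 h1 hM, tensor_fd N M h2 hf,
      by rw [G.cls_tensor N M h1 hM h2 hf, h3, pow_succ],
      by rw [C_tensor N M h2 hf, h4, pow_succ]⟩

end GrSemiring

section Matching

open Comod

variable {k : Type} [Field k] [IsAlgClosed k]
    {A : Type} [Ring A] [HopfAlgebra k A]
    {H : Type} [Ring H] [HopfAlgebra k H]
    (GA : GrSemiring k A) (GH : GrSemiring k H)
    (f : GH.R ≃+* GA.R)

theorem finrank_C_eq (hA : IsCosemisimple k A) (hH : IsCosemisimple k H)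
    (hdim : ∀ M : Comod k H, M.IsSimple →
      ∀ M' : Comod k A, M'.IsComodule → FiniteDimensional k M'.X →
        GA.cls M' = f (GH.cls M) →
          Module.finrank k M'.X = Module.finrank k M.X)
    (M : Comod k H) (hM : M.IsComodule) (hf : FiniteDimensional k M.X)
    (M' : Comod k A) (hM' : M'.IsComodule) (hf' : FiniteDimensional k M'.X)
    (hcls : GA.cls M' = f (GH.cls M)) :
    Module.finrank k M.C = Module.finrank k M'.C := by
  classical
  obtain ⟨ι, _, S, hS, hsum⟩ := GH.exists_decomp hH _ M hM hf rfl
  choose S' hS'c hS'f hS'cls using fun i => GA.cls_surj (f (GH.cls (S i)))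
  have hS' : ∀ i, (S' i).IsSimple := fun i => by
    obtain ⟨h0, h1⟩ := GH.simple_indecomp (hS i)
    refine GA.simple_of_indecomp hA (hS'c i) (hS'f i) ?_ ?_
    · rw [hS'cls]; simpa using h0
    · intro a b hab
      rw [hS'cls] at hab
      have := h1 (f.symm a) (f.symm b) (by rw [← map_add, ← hab, RingEquiv.symm_apply_apply])
      simpa using this
  have hC : M.C = ⨆ i, (S i).C := by
    have := GH.C_of_sum Finset.univ S (fun i => (hS i).1) (fun i => (hS i).2.2.1) M hM hf hsum
    simpa using this
  have hC' : M'.C = ⨆ i, (S' i).C := by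
    have := GA.C_of_sum Finset.univ S' hS'c hS'f M' hM' hf'
      (by rw [hcls, hsum, map_sum]; simp only [hS'cls])
    simpa using this
  let r : Setoid ι := Setoid.ker (fun i => GH.cls (S i))
  have hr : ∀ i : ι, GH.cls (S (Quotient.mk r i).out) = GH.cls (S i) := fun i =>
    Quotient.mk_out (s := r) i
  have hR : ∀ q q' : Quotient r, GH.cls (S q.out) = GH.cls (S q'.out) → q = q' := fun q q' h => by
    rw [← q.out_eq, ← q'.out_eq]
    exact Quotient.sound h
  have hD : (⨆ i, (S i).C) = ⨆ q : Quotient r, (S q.out).C := by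
    apply le_antisymm
    · refine iSup_le fun i => ?_
      refine le_trans (le_of_eq ?_) (le_iSup _ (Quotient.mk r i))
      exact GH.C_eq_of_cls (hS _).1 (hS _).2.2.1 (hS _).1 (hS _).2.2.1 (hr i).symm
    · exact iSup_le fun q => le_iSup (fun i => (S i).C) q.out
  have hD' : (⨆ i, (S' i).C) = ⨆ q : Quotient r, (S' q.out).C := by
    apply le_antisymm
    · refine iSup_le fun i => ?_
      refine le_trans (le_of_eq ?_) (le_iSup _ (Quotient.mk r i))
      exact GA.C_eq_of_cls (hS' _).1 (hS' _).2.2.1 (hS' _).1 (hS' _).2.2.1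
        (by rw [hS'cls, hS'cls, hr i])
    · exact iSup_le fun q => le_iSup (fun i => (S' i).C) q.out
  rw [hC, hC', hD, hD']
  rw [finrank_iSup_C (fun q : Quotient r => S q.out) (fun q => hS _) ?_,
    finrank_iSup_C (fun q : Quotient r => S' q.out) (fun q => hS' _) ?_]
  · refine Finset.sum_congr rfl fun q _ => ?_
    rw [hdim _ (hS q.out) _ (hS'c q.out) (hS'f q.out) (hS'cls q.out)]
  · intro q q' hne hiso
    apply hne
    apply hR
    apply f.injective
    rw [← hS'cls, ← hS'cls]
    exact GA.cls_iso _ _ (hS' _).1 (hS' _).1 (hS' _).2.2.1 (hS' _).2.2.1 hiso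
  · intro q q' hne hiso
    apply hne
    apply hR
    exact GH.cls_iso _ _ (hS _).1 (hS _).1 (hS _).2.2.1 (hS _).2.2.1 hiso

theorem finrank_C_pow_eq (hA : IsCosemisimple k A) (hH : IsCosemisimple k H)
    (hdim : ∀ M : Comod k H, M.IsSimple →
      ∀ M' : Comod k A, M'.IsComodule → FiniteDimensional k M'.X →
        GA.cls M' = f (GH.cls M) →
          Module.finrank k M'.X = Module.finrank k M.X)
    (M : Comod k H) (hM : M.IsComodule) (hf : FiniteDimensional k M.X)
    (M' : Comod k A) (hM' : M'.IsComodule) (hf' : FiniteDimensional k M'.X)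
    (hcls : GA.cls M' = f (GH.cls M)) (n : ℕ) :
    Module.finrank k ↥(M.C ^ n) = Module.finrank k ↥(M'.C ^ n) := by
  obtain ⟨N, h1, h2, h3, h4⟩ := GH.exists_pow hM hf n
  obtain ⟨N', h1', h2', h3', h4'⟩ := GA.exists_pow hM' hf' n
  rw [← h4, ← h4']
  exact finrank_C_eq GA GH f hA hH hdim N h1 h2 N' h1' h2' (by rw [h3', hcls, h3, map_pow])

theorem gkdim_le_of {B B' : Type} [Ring B] [Algebra k B] [Ring B'] [Algebra k B']
    (h : ∀ V : Submodule k B, FiniteDimensional k V → ∃ W : Submodule k B',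
      FiniteDimensional k W ∧ ∀ n : ℕ, Module.finrank k ↥(V ^ n) ≤ Module.finrank k ↥(W ^ n)) :
    GKdim k B ≤ GKdim k B' := by
  unfold GKdim
  refine iSup₂_le fun V hV => ?_
  obtain ⟨W, hW, hle⟩ := h V hV
  refine le_trans ?_ (le_iSup₂ W hW)
  refine Filter.limsup_le_limsup (Filter.Eventually.of_forall fun n => ?_)
  apply ENNReal.ofReal_le_ofReal
  refine div_le_div_of_nonneg_right ?_ (Real.log_natCast_nonneg n)
  rcases Nat.eq_zero_or_pos (Module.finrank k ↥(V ^ n)) with h0 | h0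
  · rw [h0]; simpa using Real.log_natCast_nonneg _
  · exact Real.log_le_log (by exact_mod_cast h0) (by exact_mod_cast hle n)

theorem finrank_pow_le (G : GrSemiring k H) {V : Submodule k H} {M : Comod k H}
    (hM : M.IsComodule) (hf : FiniteDimensional k M.X) (hV : V ≤ M.C) (n : ℕ) :
    Module.finrank k ↥(V ^ n) ≤ Module.finrank k ↥(M.C ^ n) := by
  obtain ⟨N, h1, h2, h3, h4⟩ := G.exists_pow hM hf n
  have : FiniteDimensional k ↥(M.C ^ n) := by rw [← h4]; infer_instance
  exact Submodule.finrank_mono (pow_le_pow_left' hV n)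

theorem gkdim_eq (hA : IsCosemisimple k A) (hH : IsCosemisimple k H)
    (hdim : ∀ M : Comod k H, M.IsSimple →
      ∀ M' : Comod k A, M'.IsComodule → FiniteDimensional k M'.X →
        GA.cls M' = f (GH.cls M) →
          Module.finrank k M'.X = Module.finrank k M.X) : GKdim k H = GKdim k A := by
  apply le_antisymm
  · apply gkdim_le_of
    intro V hV
    obtain ⟨M, hM, hf, hVM⟩ := exists_comod_C_ge V hV
    obtain ⟨M', hM', hf', hcls⟩ := GA.cls_surj (f (GH.cls M))
    refine ⟨M'.C, inferInstance, fun n => ?_⟩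
    rw [← finrank_C_pow_eq GA GH f hA hH hdim M hM hf M' hM' hf' hcls n]
    exact finrank_pow_le GH hM hf hVM n
  · apply gkdim_le_of
    intro V hV
    obtain ⟨M', hM', hf', hVM⟩ := exists_comod_C_ge V hV
    obtain ⟨M, hM, hf, hcls⟩ := GH.cls_surj (f.symm (GA.cls M'))
    refine ⟨M.C, inferInstance, fun n => ?_⟩
    rw [finrank_C_pow_eq GA GH f hA hH hdim M hM hf M' hM' hf' (by rw [hcls]; simp) n]
    exact finrank_pow_le GA hM' hf' hVM n

end Matching


/-- Theorem 2.7, the main theorem of the paper.  Let `G` be a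
linearly reductive affine algebraic group over an algebraically closed field
`k`, presented by its coordinate Hopf algebra `A = O(G)` (a commutative, reduced,
finitely generated Hopf algebra, cosemisimple since `G` is linearly reductive).
Let `H` be a finitely generated cosemisimple Hopf algebra which is a quantum
function algebra on `G`: `(R_+(H), d_H) ≅ (R_+(G), d_G)`.
Then `GKdim H = dim G`, the dimension of `G` as an algebraic variety
(i.e. the Krull dimension of `O(G)`). -/
theorem stmt3 (k : Type) [Field k] [IsAlgClosed k]
    (A : Type) [CommRing A] [HopfAlgebra k A]
    (hred : IsReduced A) (hfgA : Algebra.FiniteType k A)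
    (hA : IsCosemisimple k A)
    (H : Type) [Ring H] [HopfAlgebra k H]
    (hH : IsCosemisimple k H) (hfgH : Algebra.FiniteType k H)
    (GA : GrSemiring k A) (GH : GrSemiring k H)
    (f : GH.R ≃+* GA.R)
    (hdim : ∀ M : Comod k H, M.IsSimple →
      ∀ M' : Comod k A, M'.IsComodule → FiniteDimensional k M'.X →
        GA.cls M' = f (GH.cls M) →
          Module.finrank k M'.X = Module.finrank k M.X)
    (d : ℕ) (hd : ringKrullDim A = d) :
    GKdim k H = d := by
  rw [gkdim_eq GA GH f hA hH hdim]
  exact gkdim_comm k A d hd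
end
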